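/- arXiv:1806.02767 — 7 statements merged into one kernel-verified Lean document; each statement's English description precedes it below -/
import Mathlib

section
/- Let k be an infinite field and let A, B, C be graded Artinian k-algebras such that C is a free extension of A with fiber B (via graded algebra maps ι : A → C and π : C → B). Then the generic linear Jordan type of C dominates that of the tensor product A ⊗_k B: there exists a linear form ℓ ∈ C_1 such that for every linear form m ∈ (A ⊗_k B)_1 and every integer k ≥ 0 one has dim_k ker((×ℓ)^k : C → C) ≤ dim_k ker((×m)^k : A ⊗_k B → A ⊗_k B). -/
open TensorProduct

def PolyFam {k W : Type*} [Field k] [AddCommGroup W] [Module k W] (F : k → Module.End k W) : Prop :=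
  ∀ (w : W) (φ : W →ₗ[k] k), ∃ p : Polynomial k, ∀ t, φ (F t w) = p.eval t

theorem PolyFam.mul {k W : Type*} [Field k] [AddCommGroup W] [Module k W] [FiniteDimensional k W]
    {F G : k → Module.End k W} (hF : PolyFam F) (hG : PolyFam G) : PolyFam (fun t => F t * G t) := by
  intro w φ
  let b := Module.finBasis k W
  choose p hp using fun i => hG w (b.coord i)
  choose q hq using fun i => hF (b i) φ
  refine ⟨∑ i, p i * q i, fun t => ?_⟩
  rw [Module.End.mul_apply, ← b.sum_repr (G t w)]
  simp only [map_sum, map_smul, smul_eq_mul, Polynomial.eval_finsetSum, Polynomial.eval_mul, ← hp,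
    ← hq, Module.Basis.coord_apply]

theorem PolyFam.const {k W : Type*} [Field k] [AddCommGroup W] [Module k W]
    (f : Module.End k W) : PolyFam (fun _ : k => f) :=
  fun w φ => ⟨Polynomial.C (φ (f w)), fun t => by simp⟩

theorem PolyFam.pow {k W : Type*} [Field k] [AddCommGroup W] [Module k W] [FiniteDimensional k W]
    {F : k → Module.End k W} (hF : PolyFam F) (n : ℕ) : PolyFam (fun t => F t ^ n) := by
  induction n with
  | zero => simpa using PolyFam.const (1 : Module.End k W)
  | succ n ih => simpa only [pow_succ] using ih.mul hF

theorem PolyFam.finite_bad {k W : Type*} [Field k] [AddCommGroup W] [Module k W]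
    [FiniteDimensional k W] {F : k → Module.End k W} (hF : PolyFam F) (t₀ : k) :
    {t | Module.finrank k (LinearMap.ker (F t₀)) < Module.finrank k (LinearMap.ker (F t))}.Finite := by
  obtain ⟨s, hs⟩ := (F t₀).rangeRestrict.exists_rightInverse_of_surjective
    (LinearMap.range_rangeRestrict _)
  obtain ⟨g, hg⟩ := (LinearMap.range (F t₀)).subtype.exists_leftInverse_of_injective
    (Submodule.ker_subtype _)
  let b := Module.finBasis k (LinearMap.range (F t₀))
  choose p hp using fun i j => hF (s (b j)) (b.coord i ∘ₗ g)
  let P := Matrix.det (Matrix.of p)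
  have hP : ∀ t, P.eval t = LinearMap.det (g ∘ₗ F t ∘ₗ s) := by
    intro t
    rw [← LinearMap.det_toMatrix b, ← Polynomial.coe_evalRingHom, RingHom.map_det]
    congr 1
    ext i j
    simp [LinearMap.toMatrix_apply, ← hp]
  have h0 : g ∘ₗ F t₀ ∘ₗ s = LinearMap.id := by
    ext x
    have h1 := LinearMap.congr_fun hs x
    have h2 := LinearMap.congr_fun hg x
    have h3 : F t₀ (s x) = x := congrArg Subtype.val h1
    simp only [LinearMap.comp_apply, h3]
    exact congrArg Subtype.val h2
  have hP0 : P ≠ 0 := by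
    intro h
    have := hP t₀
    rw [h0, h] at this
    simp at this
  classical
  refine (P.roots.toFinset.finite_toSet).subset ?_
  intro t ht
  simp only [Finset.mem_coe, Multiset.mem_toFinset, Polynomial.mem_roots hP0, Polynomial.IsRoot.def]
  by_contra hne
  rw [hP] at hne
  have hinj : Function.Injective (g ∘ₗ F t ∘ₗ s) := by
    have := LinearMap.isUnit_iff_isUnit_det (g ∘ₗ F t ∘ₗ s)
    have h2 := this.2 (isUnit_iff_ne_zero.2 hne)
    exact ((Module.End.isUnit_iff _).1 h2).1
  have hle : Module.finrank k (LinearMap.range (F t₀)) ≤ Module.finrank k (LinearMap.range (F t)) := by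
    refine LinearMap.finrank_le_finrank_of_injective (f := (F t).rangeRestrict ∘ₗ s) ?_
    intro x y hxy
    apply hinj
    have : F t (s x) = F t (s y) := congrArg Subtype.val hxy
    simp [this]
  have e1 := LinearMap.finrank_range_add_finrank_ker (F t₀)
  have e2 := LinearMap.finrank_range_add_finrank_ker (F t)
  simp only [Set.mem_ofPred_eq] at ht
  omega

/-- a linear family has a simultaneous generic member -/
theorem exists_generic {k V W : Type*} [Field k] [Infinite k] [AddCommGroup W] [Module k W]
    [FiniteDimensional k W] [AddCommGroup V] [Module k V] (f : V →ₗ[k] Module.End k W) :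
    ∃ v, ∀ w n, Module.finrank k (LinearMap.ker (f v ^ n)) ≤
      Module.finrank k (LinearMap.ker (f w ^ n)) := by
  let d := Module.finrank k W
  let S : V → ℕ := fun v => ∑ n ∈ Finset.range (d + 1), Module.finrank k (LinearMap.ker (f v ^ n))
  obtain ⟨v, hv⟩ : ∃ v, ∀ w, S v ≤ S w := by
    refine ⟨Function.argmin S, fun w => Function.argmin_le S w⟩
  have key : ∀ w, ∀ n ≤ d, Module.finrank k (LinearMap.ker (f v ^ n)) ≤
      Module.finrank k (LinearMap.ker (f w ^ n)) := by
    intro w n hn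
    have hpoly : PolyFam (fun t : k => f (v + t • (w - v))) := by
      intro x φ
      refine ⟨Polynomial.C (φ (f v x)) + Polynomial.X * Polynomial.C (φ (f (w - v) x)), fun t => ?_⟩
      simp only [map_add, map_smul, LinearMap.add_apply, LinearMap.smul_apply, smul_eq_mul,
        Polynomial.eval_add, Polynomial.eval_mul, Polynomial.eval_C, Polynomial.eval_X]
    have hfin : (⋃ n ∈ Finset.range (d + 1), ({t : k | Module.finrank k (LinearMap.ker (f (v + (0 : k) • (w - v)) ^ n)) < Module.finrank k (LinearMap.ker (f (v + t • (w - v)) ^ n))} ∪ {t | Module.finrank k (LinearMap.ker (f (v + (1 : k) • (w - v)) ^ n)) < Module.finrank k (LinearMap.ker (f (v + t • (w - v)) ^ n))})).Finite :=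
      (Finset.finite_toSet _).biUnion fun n _ =>
        ((hpoly.pow n).finite_bad 0).union ((hpoly.pow n).finite_bad 1)
    obtain ⟨t, ht⟩ := hfin.exists_notMem
    simp only [Set.mem_iUnion, Set.mem_union, Set.mem_ofPred_eq, not_exists, not_or, not_lt] at ht
    have e0 : v + (0 : k) • (w - v) = v := by simp
    have e1 : v + (1 : k) • (w - v) = w := by simp
    rw [e0, e1] at ht
    set u := v + t • (w - v)
    have hSu := hv u
    have hle : ∀ i ∈ Finset.range (d + 1), Module.finrank k (LinearMap.ker (f u ^ i)) ≤ Module.finrank k (LinearMap.ker (f v ^ i)) :=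
      fun i hi => (ht i hi).1
    have hEq := (Finset.sum_eq_sum_iff_of_le hle).1 (le_antisymm (Finset.sum_le_sum hle) hSu)
    have hn' : n ∈ Finset.range (d + 1) := by simp; omega
    rw [← hEq n hn']
    exact (ht n hn').2
  refine ⟨v, fun w n => ?_⟩
  rcases le_total n d with h | h
  · exact key w n h
  · rw [Module.End.ker_pow_eq_ker_pow_finrank_of_le h, Module.End.ker_pow_eq_ker_pow_finrank_of_le h]
    exact key w d le_rfl

theorem finrank_ker_pow_le {k W W' : Type*} [Field k] [AddCommGroup W] [Module k W]
    [AddCommGroup W'] [Module k W'] [FiniteDimensional k W']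
    (f : Module.End k W) (g : Module.End k W') (Ψ : W →ₗ[k] W') (hΨ : Function.Injective Ψ)
    (h : ∀ x, Ψ (f x) = g (Ψ x)) (n : ℕ) :
    Module.finrank k (LinearMap.ker (f ^ n)) ≤ Module.finrank k (LinearMap.ker (g ^ n)) := by
  have hn : ∀ n x, Ψ ((f ^ n) x) = (g ^ n) (Ψ x) := by
    intro n
    induction n with
    | zero => simp
    | succ n ih => intro x; rw [pow_succ, pow_succ, Module.End.mul_apply, Module.End.mul_apply, ih, h]
  refine LinearMap.finrank_le_finrank_of_injective
    (f := Ψ.restrict (p := LinearMap.ker (f ^ n)) (q := LinearMap.ker (g ^ n)) ?_) ?_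
  · intro x hx
    rw [LinearMap.mem_ker] at hx ⊢
    rw [← hn, hx, map_zero]
  · intro x y hxy
    exact Subtype.ext (hΨ (congrArg Subtype.val hxy))

noncomputable def scaleHom {k A : Type*} [Field k] [CommRing A] [Algebra k A]
    (𝒜 : ℕ → Submodule k A) [GradedAlgebra 𝒜] (t : k) : A →ₐ[k] A :=
  (DirectSum.toAlgebra k (fun i => 𝒜 i) (fun i => t ^ i • (𝒜 i).subtype)
    (by simp)
    (by
      intro i j x y
      simp [pow_add, smul_smul, mul_comm])).comp
    (DirectSum.decomposeAlgEquiv 𝒜).toAlgHom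

theorem scaleHom_mem {k A : Type*} [Field k] [CommRing A] [Algebra k A]
    (𝒜 : ℕ → Submodule k A) [GradedAlgebra 𝒜] (t : k) {i : ℕ} {a : A} (ha : a ∈ 𝒜 i) :
    scaleHom 𝒜 t a = t ^ i • a := by
  change DirectSum.toAddMonoid _ (DirectSum.decompose 𝒜 a) = _
  rw [DirectSum.decompose_of_mem 𝒜 ha, DirectSum.toAddMonoid_of]
  rfl

theorem scaleHom_comp {k A : Type*} [Field k] [CommRing A] [Algebra k A]
    (𝒜 : ℕ → Submodule k A) [GradedAlgebra 𝒜] (s t : k) (a : A) :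
    scaleHom 𝒜 s (scaleHom 𝒜 t a) = scaleHom 𝒜 (s * t) a := by
  induction a using DirectSum.Decomposition.inductionOn 𝒜 with
  | zero => simp
  | homogeneous a =>
    rw [scaleHom_mem 𝒜 _ a.2, map_smul, scaleHom_mem 𝒜 _ a.2, scaleHom_mem 𝒜 _ a.2, smul_smul,
      mul_pow, mul_comm]
  | add a b ha hb => simp only [map_add, ha, hb]

theorem scaleHom_one {k A : Type*} [Field k] [CommRing A] [Algebra k A]
    (𝒜 : ℕ → Submodule k A) [GradedAlgebra 𝒜] (a : A) :
    scaleHom 𝒜 (1 : k) a = a := by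
  induction a using DirectSum.Decomposition.inductionOn 𝒜 with
  | zero => simp
  | homogeneous a => rw [scaleHom_mem 𝒜 _ a.2, one_pow, one_smul]
  | add a b ha hb => simp only [map_add, ha, hb]

theorem scaleHom_injective {k A : Type*} [Field k] [CommRing A] [Algebra k A]
    (𝒜 : ℕ → Submodule k A) [GradedAlgebra 𝒜] {t : k} (ht : t ≠ 0) :
    Function.Injective (scaleHom 𝒜 t) := by
  intro x y h
  have := congrArg (scaleHom 𝒜 t⁻¹) h
  rwa [scaleHom_comp, scaleHom_comp, inv_mul_cancel₀ ht, scaleHom_one, scaleHom_one] at this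

theorem scaleHom_poly {k A : Type*} [Field k] [CommRing A] [Algebra k A]
    (𝒜 : ℕ → Submodule k A) [GradedAlgebra 𝒜] (a : A) (φ : A →ₗ[k] k) :
    ∃ p : Polynomial k, ∀ t, φ (scaleHom 𝒜 t a) = p.eval t := by
  induction a using DirectSum.Decomposition.inductionOn 𝒜 with
  | zero => exact ⟨0, by simp⟩
  | @homogeneous i a =>
    refine ⟨Polynomial.X ^ i * Polynomial.C (φ a), fun t => ?_⟩
    rw [scaleHom_mem 𝒜 _ a.2, map_smul, smul_eq_mul, Polynomial.eval_mul, Polynomial.eval_pow,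
      Polynomial.eval_X, Polynomial.eval_C]
  | add a b ha hb =>
    obtain ⟨p, hp⟩ := ha
    obtain ⟨q, hq⟩ := hb
    exact ⟨p + q, fun t => by simp [hp, hq]⟩

noncomputable def famG {k A Q : Type*} [Field k] [CommRing A] [Algebra k A] [Fintype Q]
    (a : A) (M : Q → Q → A) : Module.End k (Q → A) where
  toFun v := fun q' => a * v q' + ∑ q, v q * M q q'
  map_add' x y := by
    ext q'
    simp only [Pi.add_apply, mul_add, add_mul, Finset.sum_add_distrib]
    ring
  map_smul' r x := by
    ext q'
    simp [Finset.smul_sum]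

theorem famG_poly {k A Q : Type*} [Field k] [CommRing A] [Algebra k A] [Fintype Q]
    (𝒜 : ℕ → Submodule k A) [GradedAlgebra 𝒜] (a : A) (M : Q → Q → A) :
    PolyFam (fun t : k => famG (k := k) a (fun q q' => scaleHom 𝒜 t (M q q'))) := by
  classical
  intro w φ
  choose p hp using fun q q' => scaleHom_poly 𝒜 (M q q')
    (φ ∘ₗ LinearMap.single k (fun _ : Q => A) q' ∘ₗ LinearMap.mulLeft k (w q))
  refine ⟨Polynomial.C (φ (a • w)) + ∑ q', ∑ q, p q q', fun t => ?_⟩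
  have : famG (k := k) a (fun q q' => scaleHom 𝒜 t (M q q')) w = a • w +
      ∑ q', ∑ q, Pi.single q' (w q * scaleHom 𝒜 t (M q q')) := by
    ext q'
    simp only [famG, LinearMap.coe_mk, AddHom.coe_mk, Pi.add_apply, Pi.smul_apply, smul_eq_mul,
      Finset.sum_apply]
    congr 1
    rw [Finset.sum_comm]
    simp [Pi.single_apply]
  rw [this]
  simp only [map_add, map_sum, Polynomial.eval_add, Polynomial.eval_finsetSum, ← hp,
    Polynomial.eval_C]
  rfl

theorem core_step {k A B C : Type*} [Field k] [Infinite k]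
    [CommRing A] [CommRing B] [CommRing C] [Nontrivial A]
    [Algebra k A] [Algebra k B] [Algebra k C]
    [FiniteDimensional k A] [FiniteDimensional k B] [FiniteDimensional k C]
    (𝒜 : ℕ → Submodule k A) [GradedAlgebra 𝒜] (hA0 : 𝒜 0 = 1)
    [Algebra A C] [IsScalarTower k A C] [Module.Free A C] (π : C →ₐ[k] B)
    (hker : RingHom.ker π = Ideal.span (algebraMap A C '' (⋃ i : ℕ, (𝒜 (i + 1) : Set A))))
    {a : A} (ha : a ∈ 𝒜 1) (c : C) (n : ℕ) :
    ∃ t : k, Module.finrank k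
        (LinearMap.ker (LinearMap.mulLeft k (t • algebraMap A C a + c) ^ n)) ≤
      Module.finrank k (LinearMap.ker (LinearMap.mulLeft k (a ⊗ₜ[k] (1 : B) + 1 ⊗ₜ π c) ^ n)) := by
  classical
  have : Module.Finite A C := Module.Finite.of_restrictScalars_finite k A C
  let u := Module.Free.chooseBasis A C
  let M : _ → _ → A := fun q q' => u.repr (c * u q) q'
  let F : k → Module.End k (Module.Free.ChooseBasisIndex A C → A) :=
    fun t => famG (k := k) a (fun q q' => scaleHom 𝒜 t (M q q'))
  have hF : PolyFam F := famG_poly 𝒜 a M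
  have hmul : ∀ c x q', u.repr (c * x) q' = ∑ q, u.repr x q * u.repr (c * u q) q' := by
    intro c x q'
    conv_lhs => rw [← u.sum_repr x]
    rw [Finset.mul_sum, map_sum, Finsupp.finsetSum_apply]
    refine Finset.sum_congr rfl fun q _ => ?_
    rw [mul_smul_comm, map_smul, Finsupp.smul_apply, smul_eq_mul]
  -- degree zero facts
  have hpos : ∀ i, ∀ x ∈ 𝒜 (i + 1), π (algebraMap A C x) = 0 := by
    intro i x hx
    rw [← RingHom.mem_ker, hker]
    exact Ideal.subset_span ⟨x, Set.mem_iUnion.2 ⟨i, hx⟩, rfl⟩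
  have hdeg : ∀ x : A, ∃ r : k, scaleHom 𝒜 (0 : k) x = algebraMap k A r ∧
      π (algebraMap A C x) = algebraMap k B r := by
    intro x
    induction x using DirectSum.Decomposition.inductionOn 𝒜 with
    | zero => exact ⟨0, by simp⟩
    | @homogeneous i x =>
      cases i with
      | zero =>
        obtain ⟨x, hx⟩ := x
        have hx' := hx
        rw [hA0, Submodule.mem_one] at hx'
        obtain ⟨r, rfl⟩ := hx'
        refine ⟨r, by simp, ?_⟩
        rw [← IsScalarTower.algebraMap_apply k A C]
        simp
      | succ i =>
        refine ⟨0, ?_, ?_⟩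
        · rw [scaleHom_mem 𝒜 _ x.2]; simp
        · rw [hpos i _ x.2]; simp
    | add x y hx hy =>
      obtain ⟨r, h1, h2⟩ := hx
      obtain ⟨s, h3, h4⟩ := hy
      exact ⟨r + s, by simp [h1, h3], by simp [h2, h4]⟩
  have hzero : ∀ x : C, π x = 0 → ∀ q, scaleHom 𝒜 (0 : k) (u.repr x q) = 0 := by
    intro x hx
    rw [← RingHom.mem_ker, hker] at hx
    refine Submodule.span_induction ?_ ?_ ?_ ?_ hx
    · rintro _ ⟨y, hy, rfl⟩ q
      obtain ⟨i, hi⟩ := Set.mem_iUnion.1 hy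
      rw [Algebra.algebraMap_eq_smul_one, map_smul, Finsupp.smul_apply, smul_eq_mul, map_mul,
        scaleHom_mem 𝒜 _ hi]
      simp
    · simp
    · intro x y _ _ hx hy q
      simp [hx, hy]
    · intro d x _ hx q
      rw [smul_eq_mul, hmul, map_sum]
      exact Finset.sum_eq_zero fun q' _ => by rw [map_mul, hx, zero_mul]
  have hli : LinearIndependent k (fun q => π (u q)) := by
    rw [Fintype.linearIndependent_iff]
    intro g hg q
    have h1 : π (∑ q, algebraMap k A (g q) • u q) = 0 := by
      rw [← hg, map_sum]
      exact Finset.sum_congr rfl fun q _ => by rw [algebraMap_smul, map_smul]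
    have h2 := hzero _ h1 q
    rw [u.repr_sum_self, AlgHom.commutes] at h2
    exact (map_eq_zero_iff _ (algebraMap k A).injective).1 h2
  -- the tensor side
  let Ψ : (Module.Free.ChooseBasisIndex A C → A) →ₗ[k] A ⊗[k] B :=
    ∑ q, ((TensorProduct.mk k A B).flip (π (u q))) ∘ₗ LinearMap.proj q
  have hΨ : ∀ v, Ψ v = ∑ q, v q ⊗ₜ[k] π (u q) := by
    intro v
    simp [Ψ]
  have hΨinj : Function.Injective Ψ := by
    rw [injective_iff_map_eq_zero]
    intro v hv
    rw [hΨ] at hv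
    obtain ⟨g, hg⟩ := (Fintype.linearCombination k (fun q => π (u q))).exists_leftInverse_of_injective
      (LinearMap.ker_eq_bot.2 (LinearIndependent.fintypeLinearCombination_injective hli))
    have hg' : ∀ q, g (π (u q)) = Pi.single q 1 := by
      intro q
      have := LinearMap.congr_fun hg (Pi.single q 1)
      simpa [Fintype.linearCombination_apply_single] using this
    funext q
    have := congrArg ((TensorProduct.rid k A).toLinearMap ∘ₗ
      LinearMap.lTensor A (LinearMap.proj q ∘ₗ g)) hv
    simpa [hg', Pi.single_apply] using this
  have hΨint : ∀ v, Ψ (F 0 v) = LinearMap.mulLeft k (a ⊗ₜ[k] (1 : B) + 1 ⊗ₜ π c) (Ψ v) := by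
    intro v
    choose r hr1 hr2 using hdeg
    have hc : ∀ q, π c * π (u q) = ∑ q', r (M q q') • π (u q') := by
      intro q
      rw [← map_mul, ← u.sum_repr (c * u q), map_sum]
      refine Finset.sum_congr rfl fun q' _ => ?_
      rw [Algebra.smul_def, map_mul, hr2, ← Algebra.smul_def]
    rw [hΨ, hΨ, LinearMap.mulLeft_apply, add_mul, Finset.mul_sum, Finset.mul_sum]
    simp only [F, famG, LinearMap.coe_mk, AddHom.coe_mk, TensorProduct.add_tmul,
      Finset.sum_add_distrib, Algebra.TensorProduct.tmul_mul_tmul, one_mul, hc, hr1]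
    congr 1
    simp only [TensorProduct.sum_tmul, TensorProduct.tmul_sum]
    rw [Finset.sum_comm]
    refine Finset.sum_congr rfl fun q _ => Finset.sum_congr rfl fun q' _ => ?_
    rw [mul_comm, ← Algebra.smul_def, TensorProduct.smul_tmul]
  obtain ⟨t, ht⟩ := (((hF.pow n).finite_bad 0).union (Set.finite_singleton (0 : k))).exists_notMem
  simp only [Set.mem_union, Set.mem_ofPred_eq, Set.mem_singleton_iff, not_or, not_lt] at ht
  obtain ⟨ht1, ht0⟩ := ht
  refine ⟨t⁻¹, le_trans ?_ (ht1.trans (finrank_ker_pow_le _ _ Ψ hΨinj hΨint n))⟩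
  let Φ : C →ₗ[k] (Module.Free.ChooseBasisIndex A C → A) :=
    { toFun := fun x q => scaleHom 𝒜 t (u.repr x q)
      map_add' := fun x y => by ext q; simp
      map_smul' := fun r x => by
        ext q
        rw [← algebraMap_smul A r x, map_smul]
        simp [Algebra.smul_def] }
  refine finrank_ker_pow_le _ _ Φ ?_ ?_ n
  · intro x y hxy
    apply u.repr.injective
    ext q
    exact scaleHom_injective 𝒜 ht0 (congrFun hxy q)
  · intro x
    ext q'
    change scaleHom 𝒜 t (u.repr ((t⁻¹ • algebraMap A C a + c) * x) q') =
      a * scaleHom 𝒜 t (u.repr x q') + ∑ q, scaleHom 𝒜 t (u.repr x q) * scaleHom 𝒜 t (M q q')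
    have h1 : (t⁻¹ • algebraMap A C a) * x = (t⁻¹ • a) • x := by
      rw [smul_mul_assoc, ← Algebra.smul_def, smul_assoc]
    rw [add_mul, map_add, Finsupp.add_apply, map_add, h1, map_smul, Finsupp.smul_apply, smul_eq_mul,
      map_mul, map_smul, scaleHom_mem 𝒜 t ha, pow_one, smul_smul, inv_mul_cancel₀ ht0, one_smul,
      hmul, map_sum]
    simp only [map_mul, M]

theorem free_extension_generic_jordan_type_dominates_tensor_product
    (k : Type*) [Field k] [Infinite k]
    (A B C : Type*) [CommRing A] [CommRing B] [CommRing C]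
    [Algebra k A] [Algebra k B] [Algebra k C]
    [FiniteDimensional k A] [FiniteDimensional k B] [FiniteDimensional k C]
    (𝒜 : ℕ → Submodule k A) (ℬ : ℕ → Submodule k B) (𝒞 : ℕ → Submodule k C)
    [GradedAlgebra 𝒜] [GradedAlgebra ℬ] [GradedAlgebra 𝒞]
    (hA0 : 𝒜 0 = 1) (hB0 : ℬ 0 = 1) (hC0 : 𝒞 0 = 1)
    (ι : A →ₐ[k] C) (π : C →ₐ[k] B)
    (hιgr : ∀ i : ℕ, ∀ a ∈ 𝒜 i, ι a ∈ 𝒞 i)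
    (hπgr : ∀ i : ℕ, ∀ c ∈ 𝒞 i, π c ∈ ℬ i)
    (hinj : Function.Injective ι)
    (hfree : @Module.Free A C _ _ (Module.compHom C (ι : A →+* C)))
    (hsurj : Function.Surjective π)
    (hker : RingHom.ker π = Ideal.span (⇑ι '' (⋃ i : ℕ, (𝒜 (i + 1) : Set A)))) :
    ∃ ℓ ∈ 𝒞 1, ∀ m ∈ (Submodule.map
        (Algebra.TensorProduct.includeLeft : A →ₐ[k] A ⊗[k] B).toLinearMap (𝒜 1) ⊔
      Submodule.map
        (Algebra.TensorProduct.includeRight : B →ₐ[k] A ⊗[k] B).toLinearMap (ℬ 1)),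
      ∀ n : ℕ,
        Module.finrank k (LinearMap.ker ((LinearMap.mulLeft k ℓ) ^ n)) ≤
          Module.finrank k (LinearMap.ker ((LinearMap.mulLeft k m) ^ n)) := by
  rcases subsingleton_or_nontrivial A with hA | hA
  · have h1 : (1 : C) = 0 := by rw [← map_one ι, Subsingleton.elim (1 : A) 0, map_zero]
    have : Subsingleton C := subsingleton_of_zero_eq_one h1.symm
    refine ⟨0, zero_mem _, fun m _ n => ?_⟩
    rw [Module.finrank_zero_of_subsingleton]
    exact Nat.zero_le _
  · obtain ⟨ℓ, hℓ⟩ := exists_generic ((LinearMap.mul k C) ∘ₗ (𝒞 1).subtype)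
    refine ⟨ℓ, ℓ.2, fun m hm n => ?_⟩
    obtain ⟨_, ⟨a, ha, rfl⟩, _, ⟨b, hb, rfl⟩, rfl⟩ := Submodule.mem_sup.1 hm
    obtain ⟨c₀, rfl⟩ := hsurj b
    have hc : π (DirectSum.decompose 𝒞 c₀ 1 : C) = π c₀ := by
      have key : ∀ x : C, π (DirectSum.decompose 𝒞 x 1 : C) = (DirectSum.decompose ℬ (π x) 1 : B) := by
        intro x
        induction x using DirectSum.Decomposition.inductionOn 𝒞 with
        | zero => simp
        | @homogeneous i x =>
          by_cases h : i = 1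
          · subst h
            rw [DirectSum.decompose_of_mem_same 𝒞 x.2,
              DirectSum.decompose_of_mem_same ℬ (hπgr _ _ x.2)]
          · rw [DirectSum.decompose_of_mem_ne 𝒞 x.2 h,
              DirectSum.decompose_of_mem_ne ℬ (hπgr _ _ x.2) h, map_zero]
        | add x y hx hy => simp [DirectSum.decompose_add, hx, hy]
      rw [key, DirectSum.decompose_of_mem_same ℬ hb]
    let _ : Algebra A C := (ι : A →+* C).toAlgebra
    have : IsScalarTower k A C := IsScalarTower.of_algebraMap_eq fun r => (ι.commutes r).symm
    have : Module.Free A C := hfree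
    obtain ⟨t, ht⟩ := core_step 𝒜 hA0 π hker ha (DirectSum.decompose 𝒞 c₀ 1 : C) n
    rw [hc] at ht
    refine le_trans ?_ ht
    exact hℓ ⟨t • ι a + (DirectSum.decompose 𝒞 c₀ 1 : C),
      add_mem (Submodule.smul_mem _ _ (hιgr 1 a ha)) (SetLike.coe_mem _)⟩ n
end

section
/- Let A be a graded Artinian algebra over a field k with Hilbert function h_i = dim_k A_i for 0 ≤ i ≤ j_A. Then for every linear form ℓ ∈ A_1 and every integer k ≥ 0, the sum of the k largest values among h_0, h_1, …, h_{j_A} is at most dim_k ker((×ℓ)^k : A → A). Equivalently, the Jordan type P_ℓ is bounded above in the dominance order by the conjugate partition H^∨(A) of the Hilbert function. -/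
theorem aux_sum_antitone (f : ℕ → ℕ) (hf : Antitone f) (S : Finset ℕ) :
    ∑ p ∈ S, f p ≤ ∑ p ∈ Finset.range S.card, f p := by
  induction S using Finset.induction_on_max with
  | empty => simp
  | insert a S h ih =>
    have ha : a ∉ S := fun h' => lt_irrefl _ (h a h')
    rw [Finset.sum_insert ha, Finset.card_insert_of_notMem ha, Finset.sum_range_succ, add_comm]
    refine add_le_add ih (hf ?_)
    have : S ⊆ Finset.range a := fun x hx => Finset.mem_range.2 (h x hx)
    simpa using Finset.card_le_card this

theorem aux_map_add {k A : Type*} [Field k] [AddCommGroup A] [Module k A]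
    [FiniteDimensional k A] (T : A →ₗ[k] A) (W : Submodule k A) :
    Module.finrank k (W.map T) + Module.finrank k (LinearMap.ker T ⊓ W : Submodule k A)
      = Module.finrank k W := by
  have h := LinearMap.finrank_range_add_finrank_ker (T.domRestrict W)
  rw [LinearMap.range_domRestrict] at h
  rw [← h]
  congr 1
  rw [inf_comm, ← Submodule.map_comap_subtype, Submodule.finrank_map_subtype_eq]
  rfl

theorem aux_filtr {k A : Type*} [Field k] [AddCommGroup A] [Module k A]
    [FiniteDimensional k A] (T : A →ₗ[k] A) (W : Submodule k A) (N : ℕ) :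
    Module.finrank k (W.map (T ^ N)) +
      ∑ q ∈ Finset.range N,
        Module.finrank k (LinearMap.ker T ⊓ W.map (T ^ q) : Submodule k A)
      = Module.finrank k W := by
  induction N with
  | zero =>
    rw [pow_zero, Module.End.one_eq_id, Submodule.map_id]
    simp
  | succ N ih =>
    rw [Finset.sum_range_succ, ← ih, ← aux_map_add T (W.map (T ^ N)), ← Submodule.map_comp,
      pow_succ', Module.End.mul_eq_comp]
    ring

theorem aux_indep {k A : Type*} [Field k] [AddCommGroup A] [Module k A]
    [FiniteDimensional k A] (V : ℕ → Submodule k A) (hV : iSupIndep V) (S : Finset ℕ) :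
    Module.finrank k (S.sup V : Submodule k A) = ∑ d ∈ S, Module.finrank k (V d) := by
  induction S using Finset.induction_on with
  | empty => simp
  | insert a S ha ih =>
    rw [Finset.sup_insert, Finset.sum_insert ha, ← ih]
    have hd : Disjoint (V a) (S.sup V) :=
      (hV.supIndep' (insert a S)) (Finset.subset_insert a S) (Finset.mem_insert_self a S) ha
    rw [← Submodule.finrank_sup_add_finrank_inf_eq, hd.eq_bot]
    simp

/-- **Proposition (Prop. 1.5 / prop:HFBound, graded case).** For a graded Artinian algebra
`A` with socle degree `j_A` and any linear form `ℓ ∈ A₁`, the Jordan type `P_ℓ` is bounded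
above in the dominance order by the conjugate `H^∨(A)` of the Hilbert function; equivalently,
for every `n`, the sum of the `n` largest values among `h_0, …, h_{j_A}` is at most
`dim ker((×ℓ)^n)` (i.e. the sum of any at most `n` of the `h_i` is at most this dimension). -/
theorem jordan_type_le_conjugate_hilbert_function_graded
    (k : Type*) [Field k]
    (A : Type*) [CommRing A] [Algebra k A] [FiniteDimensional k A]
    (𝒜 : ℕ → Submodule k A) [GradedAlgebra 𝒜] (hA0 : 𝒜 0 = 1)
    (jA : ℕ) (hjA : 𝒜 jA ≠ ⊥ ∧ ∀ i : ℕ, jA < i → 𝒜 i = ⊥) :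
    ∀ ℓ ∈ 𝒜 1, ∀ n : ℕ, ∀ s : Finset ℕ, s ⊆ Finset.range (jA + 1) → s.card ≤ n →
      ∑ i ∈ s, Module.finrank k (𝒜 i) ≤
        Module.finrank k (LinearMap.ker ((LinearMap.mulLeft k ℓ) ^ n)) := by
  intro ℓ hℓ n s hs hn
  set T := LinearMap.mulLeft k ℓ with hT
  set D := jA + 1 with hD
  have hTA : ∀ i, (𝒜 i).map T ≤ 𝒜 (i + 1) := by
    rintro i _ ⟨x, hx, rfl⟩
    rw [hT, LinearMap.mulLeft_apply, add_comm]
    exact SetLike.mul_mem_graded hℓ hx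
  have hTp : ∀ p i, (𝒜 i).map (T ^ p) ≤ 𝒜 (i + p) := by
    intro p
    induction p with
    | zero => intro i; simp [Module.End.one_eq_id]
    | succ p ih =>
      intro i
      rw [pow_succ', Module.End.mul_eq_comp, Submodule.map_comp]
      exact (Submodule.map_mono (ih i)).trans (hTA (i + p))
  let G : ℕ → ℕ → Submodule k A := fun d p =>
    if p ≤ d then (𝒜 (d - p)).map (T ^ p) else ⊥
  let g : ℕ → ℕ → ℕ := fun d p =>
    Module.finrank k (LinearMap.ker T ⊓ G d p : Submodule k A)
  have hGA : ∀ d p, G d p ≤ 𝒜 d := by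
    intro d p
    by_cases h : p ≤ d
    · have := hTp p (d - p)
      rw [Nat.sub_add_cancel h] at this
      simpa only [G, if_pos h] using this
    · simp only [G, if_neg h, bot_le]
  have hGr : ∀ d p, G d p ≤ (⊤ : Submodule k A).map (T ^ p) := by
    intro d p
    by_cases h : p ≤ d
    · simpa only [G, if_pos h] using Submodule.map_mono le_top
    · simp only [G, if_neg h, bot_le]
  have hGanti : ∀ d, Antitone (G d) := by
    intro d
    refine antitone_nat_of_succ_le fun p => ?_
    by_cases h : p + 1 ≤ d
    · have h' : p ≤ d := by omega
      simp only [G, if_pos h, if_pos h']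
      rw [pow_succ, Module.End.mul_eq_comp, Submodule.map_comp]
      refine Submodule.map_mono ((hTA _).trans_eq ?_)
      congr 1
      omega
    · simp only [G, if_neg h, bot_le]
  have hganti : ∀ d, Antitone (g d) := fun d p q hpq =>
    Submodule.finrank_mono (inf_le_inf_left _ (hGanti d hpq))
  have hh : ∀ i ∈ s, Module.finrank k (𝒜 i) =
      ∑ d ∈ Finset.range D, if i ≤ d then g d (d - i) else 0 := by
    intro i hi
    have hiD : i < D := Finset.mem_range.1 (hs hi)
    rw [← aux_filtr T (𝒜 i) (D - i)]
    have h0 : (𝒜 i).map (T ^ (D - i)) = ⊥ := by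
      rw [eq_bot_iff, ← hjA.2 D (by omega)]
      have := hTp (D - i) i
      rwa [Nat.add_sub_cancel' hiD.le] at this
    rw [h0, finrank_bot, zero_add, ← Finset.sum_filter]
    have : (Finset.range D).filter (fun d => i ≤ d) = Finset.Ico i D := by
      ext d; simp; omega
    rw [this, Finset.sum_Ico_eq_sum_range]
    refine Finset.sum_congr rfl fun q _ => ?_
    have hG : G (i + q) q = (𝒜 i).map (T ^ q) := by
      simp only [G]
      rw [if_pos (Nat.le_add_left q i), Nat.add_sub_cancel]
    simp only [g, Nat.add_sub_cancel_left]
    rw [hG]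
  have hker : Module.finrank k (LinearMap.ker (T ^ n)) = ∑ p ∈ Finset.range n,
      Module.finrank k (LinearMap.ker T ⊓ (⊤ : Submodule k A).map (T ^ p) : Submodule k A) := by
    have h1 := aux_filtr T ⊤ n
    have h2 := LinearMap.finrank_range_add_finrank_ker (T ^ n)
    rw [Submodule.map_top, finrank_top] at h1
    omega
  have hind : iSupIndep 𝒜 := (DirectSum.Decomposition.isInternal 𝒜).submodule_iSupIndep
  have hlow : ∀ p, ∑ d ∈ Finset.range D, g d p ≤
      Module.finrank k (LinearMap.ker T ⊓ (⊤ : Submodule k A).map (T ^ p) : Submodule k A) := by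
    intro p
    have := aux_indep (fun d => LinearMap.ker T ⊓ G d p)
      (hind.mono fun d => inf_le_right.trans (hGA d p)) (Finset.range D)
    simp only [g]
    rw [← this]
    exact Submodule.finrank_mono (Finset.sup_le fun d _ => inf_le_inf_left _ (hGr d p))
  rw [Finset.sum_congr rfl hh, Finset.sum_comm, hker]
  refine le_trans ?_ (Finset.sum_le_sum fun p _ => hlow p)
  rw [Finset.sum_comm (s := Finset.range n)]
  refine Finset.sum_le_sum fun d _ => ?_
  rw [← Finset.sum_filter]
  have hinj : Set.InjOn (fun i => d - i) (s.filter (fun i => i ≤ d) : Finset ℕ) := by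
    intro a ha b hb hab
    simp at ha hb hab
    omega
  rw [← Finset.sum_image (f := g d) hinj]
  refine (aux_sum_antitone (g d) (hganti d) _).trans ?_
  refine Finset.sum_le_sum_of_subset (Finset.range_subset_range.2 ?_)
  exact Finset.card_image_le.trans ((Finset.card_filter_le _ _).trans hn)
end

section
/- Let (A, m, k) be a local Artinian k-algebra with residue field k, and let h_i = dim_k(m^i/m^{i+1}) be its Hilbert function. Then for every ℓ ∈ m and every integer k ≥ 0, the sum of the k largest values among the h_i is at most dim_k ker((×ℓ)^k : A → A). Equivalently, the Jordan type P_ℓ is bounded above in the dominance order by the conjugate partition H^∨(A) of the Hilbert function. -/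
theorem aux_step {k V : Type*} [Field k] [AddCommGroup V] [Module k V] [FiniteDimensional k V]
    (T : V →ₗ[k] V) (P Q K : Submodule k V) (hPQ : ∀ x ∈ P, T x ∈ Q) (hK : K ≤ Q) :
    Module.finrank k K + Module.finrank k P ≤
      Module.finrank k (P ⊓ K.comap T : Submodule k V) + Module.finrank k Q := by
  let T' : P →ₗ[k] Q := T.restrict hPQ
  let g : P →ₗ[k] (Q ⧸ K.submoduleOf Q) := (K.submoduleOf Q).mkQ ∘ₗ T'
  have h1 := g.finrank_range_add_finrank_ker
  have h2 : Module.finrank k (LinearMap.range g) ≤ _ := Submodule.finrank_le _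
  have h3 := (K.submoduleOf Q).finrank_quotient_add_finrank
  have h4 : Module.finrank k (K.submoduleOf Q) = Module.finrank k K :=
    (Submodule.submoduleOfEquivOfLe hK).finrank_eq
  have h5 : Module.finrank k (LinearMap.ker g) ≤
      Module.finrank k (P ⊓ K.comap T : Submodule k V) := by
    rw [← Submodule.finrank_map_subtype_eq P (LinearMap.ker g)]
    apply Submodule.finrank_mono
    rintro _ ⟨x, hx, rfl⟩
    refine ⟨x.2, ?_⟩
    have hx' : T' x ∈ K.submoduleOf Q := by
      have : (K.submoduleOf Q).mkQ (T' x) = 0 := hx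
      simpa using this
    exact hx'
  omega

theorem aux_filt {k V : Type*} [Field k] [AddCommGroup V] [Module k V] [FiniteDimensional k V]
    (T : V →ₗ[k] V) (F : ℕ → Submodule k V) (hF : Antitone F)
    (hT : ∀ i, ∀ x ∈ F i, T x ∈ F (i + 1)) :
    ∀ n : ℕ, ∀ s : Finset ℕ, s.card ≤ n → ∀ j, (∀ i ∈ s, j ≤ i) →
      ∑ i ∈ s, (Module.finrank k (F i) - Module.finrank k (F (i + 1))) ≤
        Module.finrank k (F j ⊓ LinearMap.ker (T ^ n) : Submodule k V) := by
  intro n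
  induction n with
  | zero =>
    intro s hs j _
    have : s = ∅ := by simpa using hs
    simp [this]
  | succ n ih =>
    intro s hs j hj
    rcases s.eq_empty_or_nonempty with rfl | hne
    · simp
    have hi := s.min'_mem hne
    have hmin : ∀ i ∈ s, s.min' hne ≤ i := fun i h => s.min'_le i h
    generalize s.min' hne = i at hi hmin
    have hih := ih (s.erase i) (by rw [Finset.card_erase_of_mem hi]; omega) (i + 1) (by
      intro a ha
      have h1 := hmin a (Finset.mem_of_mem_erase ha)
      have h2 := Finset.ne_of_mem_erase ha
      omega)
    rw [← Finset.add_sum_erase s _ hi]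
    have hst := aux_step T (F i) (F (i + 1)) (F (i + 1) ⊓ LinearMap.ker (T ^ n)) (hT i) inf_le_left
    have hle : Module.finrank k (F i ⊓ (F (i + 1) ⊓ LinearMap.ker (T ^ n)).comap T : Submodule k V)
        ≤ Module.finrank k (F j ⊓ LinearMap.ker (T ^ (n + 1)) : Submodule k V) := by
      apply Submodule.finrank_mono
      rintro x ⟨hx, -, hx2⟩
      refine ⟨hF (hj i hi) hx, ?_⟩
      have hx3 : (T ^ n) (T x) = 0 := hx2
      simpa [pow_succ] using hx3
    have hm : Module.finrank k (F (i + 1)) ≤ Module.finrank k (F i) :=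
      Submodule.finrank_mono (hF (Nat.le_succ i))
    omega

/-- **Proposition (Prop. 1.5 / prop:HFBound, local case).** For a local Artinian algebra
`(A, m, k)` with residue field `k` and Hilbert function `h_i = dim_k m^i/m^{i+1}`, and any
`ℓ ∈ m`, the Jordan type `P_ℓ` is bounded above in the dominance order by the conjugate
`H^∨(A)` of the Hilbert function; equivalently, for every `n`, the sum of the `n` largest
values among the `h_i` is at most `dim ker((×ℓ)^n)` (i.e. the sum of any at most `n` of the
`h_i` is at most this dimension). -/
theorem jordan_type_le_conjugate_hilbert_function_local
    (k : Type*) [Field k]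
    (A : Type*) [CommRing A] [Algebra k A] [FiniteDimensional k A] [IsLocalRing A]
    (hres : ∀ a : A, ∃ c : k, a - algebraMap k A c ∈ IsLocalRing.maximalIdeal A) :
    ∀ ℓ ∈ IsLocalRing.maximalIdeal A, ∀ n : ℕ, ∀ s : Finset ℕ, s.card ≤ n →
      ∑ i ∈ s,
        (Module.finrank k ((IsLocalRing.maximalIdeal A ^ i).restrictScalars k) -
          Module.finrank k ((IsLocalRing.maximalIdeal A ^ (i + 1)).restrictScalars k)) ≤
        Module.finrank k (LinearMap.ker ((LinearMap.mulLeft k ℓ) ^ n)) := by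
  intro ℓ hℓ n s hs
  refine (aux_filt (LinearMap.mulLeft k ℓ)
    (fun i => (IsLocalRing.maximalIdeal A ^ i).restrictScalars k) ?_ ?_ n s hs 0
    (fun _ _ => Nat.zero_le _)).trans (Submodule.finrank_mono inf_le_right)
  · intro a b hab x hx
    exact Ideal.pow_le_pow_right hab hx
  · intro i x hx
    change ℓ * x ∈ IsLocalRing.maximalIdeal A ^ (i + 1)
    rw [pow_succ']
    exact Ideal.mul_mem_mul hℓ hx
end

section
/- Let k be a field, R = k[x_1,…,x_r], S = R[t] = k[x_1,…,x_r,t], and let S act on Q_S = k[X_1,…,X_r,T] by contraction. Let F_B ∈ k[X_1,…,X_r] be homogeneous of degree j_B such that I_B = Ann_R(F_B) has finite colength, and set B = R/I_B. Fix m ≥ 0, set A = k[t]/(t^{m+1}), let G ∈ k[X_1,…,X_r] be homogeneous of degree j_B + m, put F = T^m·F_B + G ∈ Q_S, and C = S/Ann_S(F). If C is a free extension of A with fiber B via ι : A → C induced by t ↦ t and π : C → B induced by x_i ↦ x_i, t ↦ 0, then (I_B)^2 ∘ G = 0. -/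
set_option synthInstance.maxHeartbeats 1000000
set_option maxHeartbeats 1000000

open Classical in
/-- Contraction action of `k[x_1,…]` on `k[X_1,…]` (the two polynomial rings being
identified): determined on monomials by `x^a ∘ X^b = X^{b-a}` if `a ≤ b` componentwise,
and `0` otherwise. -/
noncomputable def contract {k : Type*} [CommRing k] {σ : Type*}
    (f F : MvPolynomial σ k) : MvPolynomial σ k :=
  ∑ b ∈ F.support, ∑ a ∈ f.support,
    if a ≤ b then
      MvPolynomial.monomial (b - a) (MvPolynomial.coeff a f * MvPolynomial.coeff b F)
    else 0

/-- The annihilator `Ann F = {f : f ∘ F = 0}` of `F` under contraction, as an ideal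
(it is closed under multiplication by ring elements, so it coincides with the ideal it
spans). -/
noncomputable def annIdeal {k : Type*} [CommRing k] {σ : Type*}
    (F : MvPolynomial σ k) : Ideal (MvPolynomial σ k) :=
  Ideal.span {f | contract f F = 0}

/-- `A = k[t]/(t^{m+1})`. -/
abbrev truncPoly (k : Type*) [Field k] (m : ℕ) : Type _ :=
  Polynomial k ⧸ Ideal.span {(Polynomial.X : Polynomial k) ^ (m + 1)}

/-- `F = Tᵐ·F_B + G ∈ Q_S`, where `S = R[t]` and the variables of `R` are embedded via
`Fin.castSucc` with `t` the last variable. -/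
noncomputable def dualGen {k : Type*} [Field k] {r : ℕ} (m : ℕ)
    (FB G : MvPolynomial (Fin r) k) : MvPolynomial (Fin (r + 1)) k :=
  (MvPolynomial.X (Fin.last r)) ^ m * MvPolynomial.rename Fin.castSucc FB +
    MvPolynomial.rename Fin.castSucc G

open MvPolynomial in
theorem contract_coeff {k : Type*} [CommRing k] {σ : Type*} (f F : MvPolynomial σ k)
    (c : σ →₀ ℕ) (s : Finset (σ →₀ ℕ)) (hs : f.support ⊆ s) :
    coeff c (contract f F) = ∑ a ∈ s, coeff a f * coeff (a + c) F := by
  classical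
  rw [← Finset.sum_subset hs (fun a _ h => by rw [notMem_support_iff.1 h, zero_mul])]
  unfold contract
  rw [Finset.sum_comm, coeff_sum]
  refine Finset.sum_congr rfl fun a _ => ?_
  rw [coeff_sum, Finset.sum_eq_single (a + c)]
  · rw [if_pos (by simp), add_tsub_cancel_left, coeff_monomial, if_pos rfl]
  · intro b _ hb
    split_ifs with h
    · rw [coeff_monomial, if_neg]
      rintro rfl
      exact hb (add_tsub_cancel_of_le h).symm
    · simp
  · intro h
    rw [notMem_support_iff] at h
    simp [h]

open MvPolynomial in
theorem contract_add_left {k : Type*} [CommRing k] {σ : Type*} (f g F : MvPolynomial σ k) :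
    contract (f + g) F = contract f F + contract g F := by
  classical
  ext c
  rw [coeff_add, contract_coeff (f + g) F c _ support_add,
    contract_coeff f F c _ Finset.subset_union_left,
    contract_coeff g F c _ Finset.subset_union_right, ← Finset.sum_add_distrib]
  simp only [coeff_add, add_mul]

open MvPolynomial in
theorem contract_add_right {k : Type*} [CommRing k] {σ : Type*} (f F G : MvPolynomial σ k) :
    contract f (F + G) = contract f F + contract f G := by
  ext c
  rw [coeff_add, contract_coeff _ _ _ _ subset_rfl, contract_coeff _ _ _ _ subset_rfl,
    contract_coeff _ _ _ _ subset_rfl, ← Finset.sum_add_distrib]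
  simp only [coeff_add, mul_add]

open MvPolynomial in
theorem contract_zero_left {k : Type*} [CommRing k] {σ : Type*} (F : MvPolynomial σ k) :
    contract 0 F = 0 := by simp [contract]

open MvPolynomial in
theorem contract_zero_right {k : Type*} [CommRing k] {σ : Type*} (F : MvPolynomial σ k) :
    contract F 0 = 0 := by simp [contract]

open MvPolynomial in
theorem contract_monomial_coeff {k : Type*} [CommRing k] {σ : Type*} (F : MvPolynomial σ k)
    (a c : σ →₀ ℕ) (x : k) :
    coeff c (contract (monomial a x) F) = x * coeff (a + c) F := by
  rw [contract_coeff _ _ _ _ support_monomial_subset]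
  classical
  rw [Finset.sum_singleton, coeff_monomial, if_pos rfl]

open MvPolynomial in
theorem contract_mul {k : Type*} [CommRing k] {σ : Type*} (f g F : MvPolynomial σ k) :
    contract (f * g) F = contract f (contract g F) := by
  induction f using MvPolynomial.induction_on' with
  | add p q hp hq => rw [add_mul, contract_add_left, contract_add_left, hp, hq]
  | monomial a x =>
    induction g using MvPolynomial.induction_on' with
    | add p q hp hq => rw [mul_add, contract_add_left, contract_add_left, contract_add_right, hp, hq]
    | monomial b y =>
      ext c
      rw [monomial_mul]
      simp only [contract_monomial_coeff]
      rw [mul_assoc, add_comm a b, add_assoc]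

open MvPolynomial in
theorem mem_annIdeal {k : Type*} [CommRing k] {σ : Type*} (f F : MvPolynomial σ k) :
    f ∈ annIdeal F ↔ contract f F = 0 := by
  constructor
  · intro h
    refine Submodule.span_induction (p := fun f _ => contract f F = 0) ?_ ?_ ?_ ?_ h
    · exact fun x hx => hx
    · exact contract_zero_left F
    · intro x y _ _ hx hy
      rw [contract_add_left, hx, hy, add_zero]
    · intro a x _ hx
      rw [smul_eq_mul, contract_mul, hx, contract_zero_right]
  · exact fun h => Ideal.subset_span h

open MvPolynomial in
theorem contract_monomial_monomial {k : Type*} [CommRing k] {σ : Type*}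
    (a b : σ →₀ ℕ) (x y : k) (d : Decidable (a ≤ b)) :
    contract (monomial a x) (monomial b y) = if a ≤ b then monomial (b - a) (x * y) else 0 := by
  classical
  ext c
  rw [contract_monomial_coeff, coeff_monomial]
  by_cases h : a ≤ b
  · rw [if_pos h, coeff_monomial]
    have : b = a + c ↔ b - a = c := by
      constructor
      · rintro rfl; simp
      · rintro rfl; exact (add_tsub_cancel_of_le h).symm
    simp only [this]
    split_ifs <;> simp
  · rw [if_neg h, if_neg, mul_zero, coeff_zero]
    rintro rfl
    exact h (by simp)

theorem mapDomain_last {r : ℕ} (b : Fin r →₀ ℕ) :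
    (b.mapDomain Fin.castSucc) (Fin.last r) = 0 := by
  apply Finsupp.mapDomain_of_notMem_range
  rintro ⟨i, hi⟩
  exact (Fin.castSucc_lt_last i).ne hi

theorem mapDomain_cs {r : ℕ} (b : Fin r →₀ ℕ) (i : Fin r) :
    (b.mapDomain Fin.castSucc) i.castSucc = b i :=
  Finsupp.mapDomain_apply (Fin.castSucc_injective r) b i

open MvPolynomial in
theorem contract_rename {k : Type*} [CommRing k] {r : ℕ} (m : ℕ)
    (f F : MvPolynomial (Fin r) k) :
    contract (rename Fin.castSucc f) (X (Fin.last r) ^ m * rename Fin.castSucc F) =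
      X (Fin.last r) ^ m * rename Fin.castSucc (contract f F) := by
  classical
  induction f using MvPolynomial.induction_on' with
  | add p q hp hq => simp only [contract_add_left, map_add, mul_add, hp, hq]
  | monomial a x =>
    induction F using MvPolynomial.induction_on' with
    | add p q hp hq => simp only [contract_add_right, map_add, mul_add, hp, hq]
    | monomial b y =>
      rw [rename_monomial, rename_monomial, X_pow_eq_monomial, monomial_mul, one_mul,
        contract_monomial_monomial _ _ _ _ (Classical.dec _),
        contract_monomial_monomial _ _ _ _ (Classical.dec _)]
      have key : Finsupp.mapDomain Fin.castSucc a ≤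
          Finsupp.single (Fin.last r) m + Finsupp.mapDomain Fin.castSucc b ↔ a ≤ b := by
        constructor
        · intro h i
          have := h i.castSucc
          simpa [mapDomain_cs, Finsupp.single_apply, (Fin.castSucc_lt_last i).ne'] using this
        · intro h i
          refine Fin.lastCases ?_ (fun i => ?_) i
          · simp [mapDomain_last]
          · simpa [mapDomain_cs, Finsupp.single_apply, (Fin.castSucc_lt_last i).ne'] using h i
      by_cases h : a ≤ b
      · rw [if_pos h, if_pos (key.2 h), rename_monomial, monomial_mul, one_mul]
        refine congrArg (fun e => monomial e (x * y)) ?_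
        ext i
        refine Fin.lastCases ?_ (fun i => ?_) i
        · simp [mapDomain_last]
        · simp [mapDomain_cs, Finsupp.single_apply, (Fin.castSucc_lt_last i).ne']
      · rw [if_neg h, if_neg (fun h' => h (key.1 h'))]
        simp

open MvPolynomial in
theorem contract_last_rename {k : Type*} [CommRing k] {r : ℕ} (F : MvPolynomial (Fin r) k) :
    contract (X (Fin.last r)) (rename Fin.castSucc F) = 0 := by
  classical
  induction F using MvPolynomial.induction_on' with
  | add p q hp hq => simp only [contract_add_right, map_add, hp, hq, add_zero]
  | monomial b y =>
    rw [rename_monomial, X, contract_monomial_monomial _ _ _ _ (Classical.dec _), if_neg]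
    intro h
    have := h (Fin.last r)
    simp [mapDomain_last] at this

/-- **Lemma (Lemma 3.5 / specialdualgen-lem, direction `⟹`).** With `B = R/Ann(F_B)`,
`A = k[t]/(t^{m+1})`, `G` homogeneous of degree `j_B + m`, and `F = Tᵐ·F_B + G`, if
`C = S/Ann_S(F)` is a free extension of `A` with fiber `B` via `ι : t ↦ t` and
`π : x_i ↦ x_i, t ↦ 0` (so that `ι(m_A)·C` is generated by the class of `t`), then
`(I_B)² ∘ G = 0`. -/
theorem dual_generator_sq_ann_of_free_extension
    (k : Type*) [Field k] (r m jB : ℕ)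
    (FB : MvPolynomial (Fin r) k) (hFB : FB.IsHomogeneous jB)
    [FiniteDimensional k (MvPolynomial (Fin r) k ⧸ annIdeal FB)]
    (G : MvPolynomial (Fin r) k) (hG : G.IsHomogeneous (jB + m))
    (hι : ∃ ι : truncPoly k m →+*
        (MvPolynomial (Fin (r + 1)) k ⧸ annIdeal (dualGen m FB G)),
      (∀ p : Polynomial k,
        ι (Ideal.Quotient.mk (Ideal.span {(Polynomial.X : Polynomial k) ^ (m + 1)}) p) =
          Ideal.Quotient.mk (annIdeal (dualGen m FB G)) (Polynomial.aeval
            (MvPolynomial.X (Fin.last r) : MvPolynomial (Fin (r + 1)) k) p)) ∧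
      Function.Injective ι ∧
      @Module.Free (truncPoly k m)
        (MvPolynomial (Fin (r + 1)) k ⧸ annIdeal (dualGen m FB G)) _ _
        (Module.compHom (MvPolynomial (Fin (r + 1)) k ⧸ annIdeal (dualGen m FB G)) ι))
    (hπ : ∃ π : (MvPolynomial (Fin (r + 1)) k ⧸ annIdeal (dualGen m FB G)) →+*
        (MvPolynomial (Fin r) k ⧸ annIdeal FB),
      (∀ f : MvPolynomial (Fin (r + 1)) k,
        π (Ideal.Quotient.mk (annIdeal (dualGen m FB G)) f) =
          Ideal.Quotient.mk (annIdeal FB)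
            (MvPolynomial.aeval (fun i => Fin.lastCases 0 MvPolynomial.X i) f)) ∧
      Function.Surjective π ∧
      RingHom.ker π =
        Ideal.span {Ideal.Quotient.mk (annIdeal (dualGen m FB G))
          (MvPolynomial.X (Fin.last r) : MvPolynomial (Fin (r + 1)) k)}) :
    ∀ f ∈ annIdeal FB, ∀ g ∈ annIdeal FB, contract (f * g) G = 0 := by
  intro f hf g hg
  obtain ⟨π, hπ1, -, hker⟩ := hπ
  have hmem : Ideal.Quotient.mk (annIdeal (dualGen m FB G))
      (MvPolynomial.rename Fin.castSucc f) ∈ RingHom.ker π := by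
    rw [RingHom.mem_ker, hπ1, MvPolynomial.aeval_rename]
    have : ((fun i => Fin.lastCases 0 MvPolynomial.X i : Fin (r + 1) → MvPolynomial (Fin r) k)
        ∘ Fin.castSucc) = MvPolynomial.X := by
      funext i
      simp
    rw [this, MvPolynomial.aeval_X_left_apply]
    exact Ideal.Quotient.eq_zero_iff_mem.2 hf
  rw [hker, Ideal.mem_span_singleton'] at hmem
  obtain ⟨h', hh⟩ := hmem
  obtain ⟨h, rfl⟩ := Ideal.Quotient.mk_surjective h'
  rw [← map_mul, eq_comm, Ideal.Quotient.mk_eq_mk_iff_sub_mem, mem_annIdeal] at hh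
  rw [mem_annIdeal] at hf hg
  have e : ∀ p : MvPolynomial (Fin r) k, contract p FB = 0 →
      contract (MvPolynomial.rename Fin.castSucc p) (dualGen m FB G) =
        MvPolynomial.rename Fin.castSucc (contract p G) := by
    intro p hp
    have h0 := contract_rename 0 p G
    simp only [pow_zero, one_mul] at h0
    rw [dualGen, contract_add_right, contract_rename, hp, h0]
    simp
  have hf' : contract (MvPolynomial.rename Fin.castSucc f) (dualGen m FB G) =
      contract (h * MvPolynomial.X (Fin.last r)) (dualGen m FB G) := by
    have := contract_add_left (MvPolynomial.rename Fin.castSucc f - h * MvPolynomial.X (Fin.last r))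
      (h * MvPolynomial.X (Fin.last r)) (dualGen m FB G)
    rwa [sub_add_cancel, hh, zero_add] at this
  apply MvPolynomial.rename_injective _ (Fin.castSucc_injective r)
  rw [map_zero, ← e _ (by rw [contract_mul, hg, contract_zero_right]), map_mul, mul_comm,
    contract_mul, hf', ← contract_mul, mul_comm, contract_mul, e g hg, contract_mul,
    contract_last_rename, contract_zero_right]
end

section
/- Let k be a field of characteristic 0, fix integers r, n ≥ 1, and let e_i(r,n) = e_i(x_1^r,…,x_n^r) be the i-th elementary symmetric polynomial evaluated at the r-th powers of the variables. Then the coinvariant algebra of the complex reflection group G(r,1,n), namely the graded Artinian complete intersection C = k[x_1,…,x_n]/(e_1(r,n),…,e_n(r,n)), is strong Lefschetz: there exists a linear form ℓ ∈ C_1 such that for all i, k ≥ 0 the map ×ℓ^k : C_i → C_{i+k} has maximal rank min(dim_k C_i, dim_k C_{i+k}). -/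
/-- The `i`-th "elementary `r`-symmetric polynomial" `e_i(r,n) = e_i(x_1^r,…,x_n^r)`. -/
noncomputable def esymmPow (k : Type*) [CommRing k] (n r i : ℕ) :
    MvPolynomial (Fin n) k :=
  ∑ s ∈ Finset.powersetCard i (Finset.univ : Finset (Fin n)),
    ∏ j ∈ s, MvPolynomial.X j ^ r

/-- The induced grading on a quotient `k[x_1,…,x_n]/I`: the degree-`i` component is the
image of the space of homogeneous polynomials of degree `i`. -/
noncomputable def quotGrade (k : Type*) [Field k] (n : ℕ)
    (I : Ideal (MvPolynomial (Fin n) k)) (i : ℕ) :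
    Submodule k (MvPolynomial (Fin n) k ⧸ I) :=
  (MvPolynomial.homogeneousSubmodule (Fin n) k i).map (Ideal.Quotient.mkₐ k I).toLinearMap


/-! ### sl2 part -/
section sl2
variable {k U : Type*} [Field k] [CharZero k] [AddCommGroup U] [Module k U]

theorem sl2_refl (E F : U →ₗ[k] U) (G : ℕ → Submodule k U) (J : Submodule k U) (N : ℕ)
    (hE : ∀ i, ∀ v ∈ G i, E v ∈ G (i+1)) (hF : ∀ i, ∀ v ∈ G (i+1), F v ∈ G i)
    (hF0 : ∀ v ∈ G 0, F v = 0) (hEJ : ∀ v ∈ J, E v ∈ J) (hFJ : ∀ v ∈ J, F v ∈ J)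
    (hc : ∀ i, ∀ v ∈ G i, F (E v) = E (F v) + ((N : k) - 2 * i) • v) :
    ∀ i, 2 * i ≤ N → ∀ c : ℕ, 0 < c → ∀ v ∈ G i, E (F v) + (c : k) • v ∈ J → v ∈ J := by
  intro i
  induction i with
  | zero =>
    intro _ c hc0 v hv h
    rw [hF0 v hv, map_zero, zero_add] at h
    exact (J.smul_mem_iff (by exact_mod_cast hc0.ne')).1 h
  | succ i ih =>
    intro hi c hc0 v hv h
    have h1 := hFJ _ h
    have hw := hF i v hv
    rw [map_add, map_smul, hc i _ hw, add_assoc, ← add_smul] at h1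
    have h2 := ih (by omega) (N - 2 * i + c) (by omega) _ hw (by
      convert h1 using 3
      push_cast [Nat.cast_sub (show 2 * i ≤ N by omega)]
      ring)
    have h3 := J.sub_mem h (hEJ _ h2)
    rw [add_sub_cancel_left] at h3
    exact (J.smul_mem_iff (by exact_mod_cast hc0.ne')).1 h3

theorem sl2_comm (E F : U →ₗ[k] U) (G : ℕ → Submodule k U) (N : ℕ)
    (hE : ∀ i, ∀ v ∈ G i, E v ∈ G (i+1))
    (hc : ∀ i, ∀ v ∈ G i, F (E v) = E (F v) + ((N : k) - 2 * i) • v) (i : ℕ) (v : U) (hv : v ∈ G i)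
    (m : ℕ) : (E ^ m) v ∈ G (i + m) ∧
      F ((E ^ (m+1)) v) = (E ^ m) (E (F v) + (((m : k) + 1) * (N - 2 * i - m)) • v) := by
  induction m with
  | zero => simpa using ⟨hv, hc i v hv⟩
  | succ m ih =>
    have h1 : (E ^ (m+1)) v ∈ G (i + (m+1)) := by
      rw [pow_succ', Module.End.mul_apply]; exact hE _ _ ih.1
    refine ⟨h1, ?_⟩
    rw [pow_succ' E (m+1), Module.End.mul_apply, hc _ _ h1, ih.2]
    rw [pow_succ' E m, Module.End.mul_apply, Module.End.mul_apply]
    simp only [map_add, map_smul]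
    rw [add_assoc, ← add_smul]
    congr 2
    push_cast
    ring

theorem sl2_inj (E F : U →ₗ[k] U) (G : ℕ → Submodule k U) (J : Submodule k U) (N : ℕ)
    (hE : ∀ i, ∀ v ∈ G i, E v ∈ G (i+1)) (hF : ∀ i, ∀ v ∈ G (i+1), F v ∈ G i)
    (hF0 : ∀ v ∈ G 0, F v = 0) (hEJ : ∀ v ∈ J, E v ∈ J) (hFJ : ∀ v ∈ J, F v ∈ J)
    (hc : ∀ i, ∀ v ∈ G i, F (E v) = E (F v) + ((N : k) - 2 * i) • v) (i : ℕ) :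
    ∀ m, 2 * i + m ≤ N → ∀ v ∈ G i, (E ^ m) v ∈ J → v ∈ J := by
  intro m
  induction m with
  | zero => intro _ v _ h; simpa using h
  | succ m ih =>
    intro hm v hv h
    have h1 := hFJ _ h
    rw [(sl2_comm E F G N hE hc i v hv m).2] at h1
    have hEF : E (F v) ∈ G i := by
      cases i with
      | zero => rw [hF0 v hv, map_zero]; exact zero_mem _
      | succ i => exact hE _ _ (hF _ _ hv)
    have h2 := ih (by omega) _ (add_mem hEF (Submodule.smul_mem _ _ hv)) h1
    refine sl2_refl E F G J N hE hF hF0 hEJ hFJ hc i (by omega) ((m+1) * (N - 2 * i - m))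
      (Nat.mul_pos (by omega) (by omega)) v hv ?_
    convert h2 using 3
    rw [Nat.sub_sub]
    push_cast [Nat.cast_sub (show 2 * i + m ≤ N by omega)]
    ring

end sl2

section fn
variable (k : Type*) [Field k] {n : ℕ}

/-- raising operator on coefficient functions -/
def opE : ((Fin n → ℕ) → k) →ₗ[k] ((Fin n → ℕ) → k) where
  toFun f c := ∑ j, if 0 < c j then f (c - Pi.single j 1) else 0
  map_add' f g := by
    ext c
    simp only [Pi.add_apply, ← Finset.sum_add_distrib]
    exact Finset.sum_congr rfl fun j _ => by split_ifs <;> simp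
  map_smul' r f := by
    ext c
    simp only [Pi.smul_apply, smul_eq_mul, Finset.mul_sum, RingHom.id_apply]
    exact Finset.sum_congr rfl fun j _ => by split_ifs <;> simp

/-- lowering operator on coefficient functions -/
def opF (d : Fin n → ℕ) : ((Fin n → ℕ) → k) →ₗ[k] ((Fin n → ℕ) → k) where
  toFun f c := ∑ j, (((c j : k) + 1) * (d j - c j - 1)) * f (c + Pi.single j 1)
  map_add' f g := by
    ext c
    simp only [Pi.add_apply, ← Finset.sum_add_distrib, mul_add]
  map_smul' r f := by
    ext c
    simp only [Pi.smul_apply, smul_eq_mul, Finset.mul_sum, RingHom.id_apply]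
    exact Finset.sum_congr rfl fun j _ => by ring

theorem opE_apply (f : (Fin n → ℕ) → k) (c : Fin n → ℕ) :
    opE k f c = ∑ j, if 0 < c j then f (c - Pi.single j 1) else 0 := rfl

theorem opF_apply (d : Fin n → ℕ) (f : (Fin n → ℕ) → k) (c : Fin n → ℕ) :
    opF k d f c = ∑ j, (((c j : k) + 1) * (d j - c j - 1)) * f (c + Pi.single j 1) := rfl

/-- functions supported in degree i -/
def fnG (n i : ℕ) : Submodule k ((Fin n → ℕ) → k) where
  carrier := {f | ∀ c, f c ≠ 0 → ∑ j, c j = i}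
  add_mem' := by
    intro f g hf hg c h
    by_cases h1 : f c = 0
    · exact hg c (by simpa [h1] using h)
    · exact hf c h1
  zero_mem' := by intro c h; simp at h
  smul_mem' := by intro r f hf c h; exact hf c (by intro h0; simp [h0] at h)

/-- functions vanishing on the box -/
def fnJ (d : Fin n → ℕ) : Submodule k ((Fin n → ℕ) → k) where
  carrier := {f | ∀ c, (∀ j, c j < d j) → f c = 0}
  add_mem' := by intro f g hf hg c h; simp [hf c h, hg c h]
  zero_mem' := by intro c h; simp
  smul_mem' := by intro r f hf c h; simp [hf c h]

theorem sum_add_single (c : Fin n → ℕ) (j : Fin n) :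
    ∑ i, (c + Pi.single j 1 : Fin n → ℕ) i = ∑ i, c i + 1 := by
  simp [Finset.sum_add_distrib]

theorem sub_add_single (c : Fin n → ℕ) (j : Fin n) (h : 0 < c j) :
    c - Pi.single j 1 + Pi.single j 1 = c := by
  ext i
  by_cases hi : i = j
  · subst hi; simp; omega
  · simp [hi]

theorem sum_sub_single (c : Fin n → ℕ) (j : Fin n) (h : 0 < c j) :
    ∑ i, (c - Pi.single j 1 : Fin n → ℕ) i + 1 = ∑ i, c i := by
  rw [← sum_add_single, sub_add_single c j h]

theorem op_comm (d : Fin n → ℕ) (hd : ∀ j, 0 < d j) (i : ℕ) (f : (Fin n → ℕ) → k) (hf : f ∈ fnG k n i) :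
    opF k d (opE k f) = opE k (opF k d f) + (((∑ j, (d j - 1) : ℕ) : k) - 2 * i) • f := by
  ext c
  have key : opF k d (opE k f) c - opE k (opF k d f) c = (∑ j, ((d j : k) - 1 - 2 * c j)) * f c := by
    have e1 : opF k d (opE k f) c = ∑ j, ∑ l, (((c j : k) + 1) * (d j - c j - 1)) *
        (if 0 < (c + Pi.single j 1 : Fin n → ℕ) l then f (c + Pi.single j 1 - Pi.single l 1) else 0) := by
      simp [opF, opE, Finset.mul_sum]
    have e2 : opE k (opF k d f) c = ∑ j, ∑ l, if 0 < c l then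
        ((((c - Pi.single l 1 : Fin n → ℕ) j : k) + 1) * (d j - (c - Pi.single l 1 : Fin n → ℕ) j - 1)) *
          f (c - Pi.single l 1 + Pi.single j 1) else 0 := by
      rw [Finset.sum_comm]
      simp only [opF, opE, LinearMap.coe_mk, AddHom.coe_mk]
      refine Finset.sum_congr rfl fun l _ => ?_
      split_ifs <;> simp
    rw [e1, e2, ← Finset.sum_sub_distrib, Finset.sum_mul]
    refine Finset.sum_congr rfl fun j _ => ?_
    rw [← Finset.sum_sub_distrib, Finset.sum_eq_single j]
    · simp only [Pi.add_apply, Pi.single_eq_same, Pi.sub_apply, add_tsub_cancel_right]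
      rw [if_pos (by omega)]
      by_cases h : 0 < c j
      · rw [if_pos h, sub_add_single c j h]
        push_cast [Nat.cast_sub (show 1 ≤ c j from h)]
        ring
      · have h0 : c j = 0 := by omega
        simp [h0]
    · intro l _ hl
      simp only [Pi.add_apply, Pi.sub_apply, Pi.single_eq_of_ne hl, Pi.single_eq_of_ne hl.symm,
        add_zero, Nat.sub_zero]
      split_ifs with h
      · have : c + Pi.single j 1 - Pi.single l 1 = c - Pi.single l 1 + Pi.single j 1 := by
          ext s
          by_cases hs : s = l
          · subst hs; simp [hl]
          · simp [hs]
        rw [this, sub_self]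
      · simp
    · simp
  rw [sub_eq_iff_eq_add] at key
  rw [key, Pi.add_apply, Pi.smul_apply, smul_eq_mul, add_comm]
  congr 1
  by_cases h : f c = 0
  · simp [h]
  · congr 1
    rw [← hf c h]
    push_cast
    rw [Finset.sum_sub_distrib, Finset.mul_sum]
    congr 1
    exact Finset.sum_congr rfl fun j _ => by push_cast [Nat.cast_sub (show 1 ≤ d j from hd j)]; rfl

theorem op_inj [CharZero k] (d : Fin n → ℕ) (hd : ∀ j, 0 < d j) (i m : ℕ)
    (h : 2 * i + m ≤ ∑ j, (d j - 1)) (f : (Fin n → ℕ) → k) (hf : f ∈ fnG k n i)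
    (hJ : ((opE k) ^ m) f ∈ fnJ k d) : f ∈ fnJ k d := by
  refine sl2_inj (opE k) (opF k d) (fnG k n) (fnJ k d) _ ?_ ?_ ?_ ?_ ?_ (op_comm k d hd) i m h f hf hJ
  · intro i v hv c hc
    rw [opE_apply] at hc
    obtain ⟨j, _, hj⟩ := Finset.exists_ne_zero_of_sum_ne_zero hc
    split_ifs at hj with h0
    · rw [← sum_sub_single c j h0, hv _ hj]
    · exact absurd rfl hj
  · intro i v hv c hc
    rw [opF_apply] at hc
    obtain ⟨j, _, hj⟩ := Finset.exists_ne_zero_of_sum_ne_zero hc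
    have := hv _ (right_ne_zero_of_mul hj)
    rw [sum_add_single] at this
    omega
  · intro v hv
    ext c
    rw [opF_apply]
    refine Finset.sum_eq_zero fun j _ => ?_
    by_contra hj
    have := hv _ (right_ne_zero_of_mul hj)
    rw [sum_add_single] at this
    omega
  · intro v hv c hc
    rw [opE_apply]
    refine Finset.sum_eq_zero fun j _ => ?_
    split_ifs
    · exact hv _ fun l => lt_of_le_of_lt (by simp) (hc l)
    · rfl
  · intro v hv c hc
    rw [opF_apply]
    refine Finset.sum_eq_zero fun j _ => ?_
    by_cases h : c j + 1 < d j
    · rw [hv, mul_zero]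
      intro l
      by_cases hl : l = j
      · subst hl; simpa using h
      · simpa [hl] using hc l
    · have : d j = c j + 1 := by have := hc j; omega
      rw [this]; push_cast; ring
end fn


/-! ### tower -/
open Polynomial in
theorem tower (r : ℕ) (hr : 1 ≤ r) (n : ℕ) : ∀ (R : Type u) [CommRing R] (g : R[X]), g.Monic →
    g.natDegree = n → ∃ (D : Type u) (_ : CommRing D) (_ : Algebra R D) (x : Fin n → D),
      ∏ j, (X - C (x j ^ r)) = g.map (algebraMap R D) ∧
      LinearIndependent R (fun a : (j : Fin n) → Fin (r * (n - j)) => ∏ j, x j ^ (a j : ℕ)) := by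
  induction n with
  | zero =>
    intro R _ g hg hn
    refine ⟨R, inferInstance, inferInstance, Fin.elim0, ?_, ?_⟩
    · rw [hg.natDegree_eq_zero.1 hn]; simp
    · rw [Fintype.linearIndependent_iff]
      intro f hf a
      rw [Fintype.sum_eq_single a (fun b hb => absurd (Subsingleton.elim b a) hb)] at hf
      simpa using hf
  | succ n ih =>
    intro R _ g hg hn
    have hnt : Nontrivial R := by
      by_contra h
      rw [not_nontrivial_iff_subsingleton] at h
      rw [Subsingleton.elim g 0] at hn
      simp at hn
    obtain ⟨G, hG⟩ : ∃ G, G = expand R r g := ⟨_, rfl⟩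
    have hGm : G.Monic := hG ▸ hg.expand (by omega)
    have hGd : G.natDegree = r * (n + 1) := by rw [hG, natDegree_expand, hn, mul_comm]
    let R' := AdjoinRoot G
    let x0 : R' := AdjoinRoot.root G
    have hli : LinearIndependent R (fun a : Fin (r * (n + 1)) => x0 ^ (a : ℕ)) := by
      have := (AdjoinRoot.powerBasis' hGm).basis.linearIndependent
      rw [PowerBasis.coe_basis] at this
      rw [← hGd]
      exact this
    have hntr : Nontrivial R' := by
      refine ⟨⟨x0 ^ 0, 0, ?_⟩⟩
      exact hli.ne_zero ⟨0, by positivity⟩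
    have hroot : (g.map (algebraMap R R')).IsRoot (x0 ^ r) := by
      have h0 : aeval x0 G = 0 := by
        rw [AdjoinRoot.aeval_eq, AdjoinRoot.mk_self]
      have h1 : aeval x0 (expand R r g) = 0 := by rw [← h0]; congr 1; exact hG.symm
      rw [expand_aeval] at h1
      rw [IsRoot, eval_map_algebraMap, h1]
    obtain ⟨g', hg'⟩ := dvd_iff_isRoot.2 hroot
    have hgm : g'.Monic := (monic_X_sub_C _).of_mul_monic_left (hg' ▸ hg.map _)
    have hgd : g'.natDegree = n := by
      have := congrArg natDegree hg'
      rw [(monic_X_sub_C _).natDegree_mul hgm, natDegree_X_sub_C, hg.natDegree_map, hn] at this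
      omega
    obtain ⟨D, iD, iA, x, hx, hl⟩ := ih R' g' hgm hgd
    letI : Algebra R D := Algebra.compHom D (algebraMap R R')
    haveI : IsScalarTower R R' D := IsScalarTower.of_algebraMap_eq' rfl
    refine ⟨D, iD, inferInstance, Fin.cons (algebraMap R' D x0) x, ?_, ?_⟩
    · rw [Fin.prod_univ_succ]
      simp only [Fin.cons_zero, Fin.cons_succ]
      rw [hx, IsScalarTower.algebraMap_eq R R' D, ← Polynomial.map_map, hg']
      simp
    · have h := linearIndependent_smul hli hl
      let φ : ((j : Fin (n+1)) → Fin (r * (n + 1 - j))) →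
          Fin (r * (n + 1)) × ((j : Fin n) → Fin (r * (n - j))) :=
        fun a => (⟨a 0, by simpa using (a 0).2⟩, fun j => ⟨a j.succ, by
          have := (a j.succ).2
          simpa using this⟩)
      have hφ : Function.Injective φ := by
        intro a b hab
        simp only [φ, Prod.mk.injEq, Fin.mk.injEq, funext_iff] at hab
        ext j
        refine Fin.cases hab.1 (fun j => hab.2 j) j
      have := h.comp φ hφ
      convert this using 2 with a
      rw [Fin.prod_univ_succ]
      simp [φ, Algebra.smul_def]

open Polynomial in
theorem prod_eq_iff {D : Type*} [CommRing D] (n : ℕ) (y : Fin n → D) :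
    ∏ j, (X - C (y j)) = X ^ n ↔
    ∀ i : Fin n, ∑ s ∈ Finset.powersetCard (i + 1) (Finset.univ : Finset (Fin n)), ∏ j ∈ s, y j = 0 := by
  have key : ∏ j, (X - C (y j)) = ∑ i ∈ Finset.range (n + 1), (-1) ^ i * (C
      (∑ s ∈ Finset.powersetCard i (Finset.univ : Finset (Fin n)), ∏ j ∈ s, y j) * X ^ (n - i)) := by
    have := Multiset.prod_X_sub_X_eq_sum_esymm ((Finset.univ : Finset (Fin n)).val.map y)
    rw [Multiset.map_map] at this
    simp only [Finset.esymm_map_val, Multiset.card_map, Finset.card_val, Finset.card_univ, Fintype.card_fin] at this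
    exact this
  constructor
  · intro h i
    rw [h] at key
    have := congrArg (fun p => coeff p (n - (i + 1))) key
    simp only [finset_sum_coeff] at this
    rw [Finset.sum_eq_single (i.1 + 1)] at this
    · rw [coeff_X_pow, if_neg (by omega)] at this
      have e : ((-1 : D[X]) ^ (i.1 + 1)) = C ((-1) ^ (i.1+1)) := by simp
      rw [e, coeff_C_mul, coeff_C_mul, coeff_X_pow, if_pos rfl, mul_one] at this
      have h2 := congrArg (fun z => (-1) ^ (i.1+1) * z) this
      simp only [← mul_assoc, ← mul_pow] at h2
      simpa using h2.symm
    · intro b hb hne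
      have e : ((-1 : D[X]) ^ b) = C ((-1) ^ b) := by simp
      rw [e, coeff_C_mul, coeff_C_mul, coeff_X_pow, if_neg, mul_zero, mul_zero]
      have := Finset.mem_range.1 hb
      omega
    · intro h; exfalso; apply h; simp
  · intro h
    rw [key, Finset.sum_range_succ', Finset.sum_eq_zero]
    · simp
    · intro i hi
      rw [h ⟨i, Finset.mem_range.1 hi⟩]
      simp


/-! ### reduction -/
section red
variable {k A : Type*} [Field k] [CommRing A] [Algebra k A] {n : ℕ}

/-- monomial -/
def mon (x : Fin n → A) (a : Fin n → ℕ) : A := ∏ j, x j ^ a j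

/-- weight -/
def wt (a : Fin n → ℕ) : ℕ := ∑ j : Fin n, (j.1 + 1) * a j

variable (k) in
/-- degree and weight filtration -/
def filt (x : Fin n → A) (d w : ℕ) : Submodule k A :=
  Submodule.span k (mon x '' {a | ∑ j, a j = d ∧ wt a ≤ w})

theorem mon_add (x : Fin n → A) (a b : Fin n → ℕ) : mon x (a + b) = mon x a * mon x b := by
  simp [mon, pow_add, Finset.prod_mul_distrib]

theorem wt_add (a b : Fin n → ℕ) : wt (a + b) = wt a + wt b := by
  simp [wt, mul_add, Finset.sum_add_distrib]

theorem mon_single (x : Fin n → A) (j : Fin n) (s : ℕ) : mon x (Pi.single j s) = x j ^ s := by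
  unfold mon
  rw [Finset.prod_eq_single j]
  · simp
  · intro b _ hb; simp [hb]
  · simp

theorem wt_single (j : Fin n) (s : ℕ) : wt (Pi.single j s) = (j + 1) * s := by
  unfold wt
  rw [Finset.sum_eq_single j]
  · simp
  · intro b _ hb; simp [hb]
  · simp

theorem filt_mul (x : Fin n → A) {d w d' w' : ℕ} {p q : A} (hp : p ∈ filt k x d w)
    (hq : q ∈ filt k x d' w') : p * q ∈ filt k x (d + d') (w + w') := by
  have h := Submodule.mul_mem_mul hp hq
  unfold filt at h
  rw [Submodule.span_mul_span] at h
  refine Submodule.span_mono ?_ h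
  rintro _ ⟨_, ⟨a, ⟨ha, ha'⟩, rfl⟩, _, ⟨b, ⟨hb, hb'⟩, rfl⟩, rfl⟩
  refine ⟨a + b, ⟨?_, ?_⟩, mon_add x a b⟩
  · simp [Finset.sum_add_distrib, ha, hb]
  · rw [wt_add]; omega

theorem filt_mono (x : Fin n → A) {d w w' : ℕ} (h : w ≤ w') : filt k x d w ≤ filt k x d w' :=
  Submodule.span_mono (Set.image_mono fun _ ha => ⟨ha.1, ha.2.trans h⟩)

theorem pow_mem_filt (x : Fin n → A) (j : Fin n) (s : ℕ) : x j ^ s ∈ filt k x s ((j + 1) * s) :=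
  Submodule.subset_span ⟨Pi.single j s, ⟨by simp, (wt_single j s).le⟩, mon_single x j s⟩

theorem one_mem_filt (x : Fin n → A) : (1 : A) ∈ filt k x 0 0 :=
  Submodule.subset_span ⟨0, ⟨by simp, by simp [wt]⟩, by simp [mon]⟩

open Polynomial in
/-- partial products -/
noncomputable def gpoly (y : Fin n → A) (j : ℕ) : A[X] :=
  ∏ i ∈ (Finset.univ : Finset (Fin n)).filter (fun i => j ≤ i.1), (X - C (y i))

open Polynomial in
theorem gpoly_succ (y : Fin n → A) (j : Fin n) :
    gpoly y j = (X - C (y j)) * gpoly y (j + 1) := by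
  unfold gpoly
  rw [← Finset.prod_insert (a := j) (f := fun i => X - C (y i)) (by simp)]
  congr 1
  ext i
  simp [Fin.ext_iff]
  omega

open Polynomial in
theorem gpoly_natDegree (y : Fin n → A) (j : ℕ) (hj : j ≤ n) : (gpoly y j).natDegree ≤ n - j := by
  refine (natDegree_prod_le _ _).trans ?_
  refine (Finset.sum_le_sum (fun i _ => natDegree_X_sub_C_le (y i))).trans ?_
  simp only [Finset.sum_const, smul_eq_mul, mul_one]
  have h1 : ((Finset.univ : Finset (Fin n)).filter (fun i => j ≤ i.1)).card
      = ((Finset.range n).filter (fun i => j ≤ i)).card := by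
    refine Finset.card_bij (fun i _ => i.1) ?_ ?_ ?_
    · intro a ha; simpa using ha
    · intro a _ b _ h; exact Fin.ext h
    · intro b hb
      simp at hb
      exact ⟨⟨b, hb.1⟩, by simpa using hb.2, rfl⟩
  rw [h1]
  have h2 : (Finset.range n).filter (fun i => j ≤ i) = Finset.Ico j n := by
    ext i; simp; omega
  rw [h2]; simp

open Polynomial in
theorem gpoly_coeff (r : ℕ) (x : Fin n → A) (h : ∏ j, (X - C (x j ^ r)) = X ^ n) (j : ℕ) (hj : j ≤ n) :
    (gpoly (fun i => x i ^ r) j).coeff (n - j) = 1 ∧ ∀ u, u ≤ n - j →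
      (gpoly (fun i => x i ^ r) j).coeff (n - j - u) ∈ filt k x (r * u) (j * (r * u)) := by
  induction j with
  | zero =>
    have : gpoly (fun i => x i ^ r) 0 = X ^ n := by rw [← h]; simp [gpoly]
    rw [this]
    refine ⟨by simp, fun u hu => ?_⟩
    rw [coeff_X_pow]
    split_ifs with hh
    · have : u = 0 := by omega
      subst this
      simpa using one_mem_filt x
    · exact zero_mem _
  | succ j ih =>
    obtain ⟨h1, h2⟩ := ih (by omega)
    set g := gpoly (fun i => x i ^ r) j with hg
    set g' := gpoly (fun i => x i ^ r) (j + 1) with hg'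
    have hgg : g = (X - C (x ⟨j, hj⟩ ^ r)) * g' := gpoly_succ (fun i => x i ^ r) ⟨j, hj⟩
    have hrec : ∀ s, g'.coeff s = g.coeff (s + 1) + x ⟨j, hj⟩ ^ r * g'.coeff (s + 1) := by
      intro s
      rw [hgg, sub_mul, coeff_sub, coeff_X_mul, coeff_C_mul]
      ring
    have hdeg : g'.natDegree ≤ n - (j + 1) := gpoly_natDegree _ _ hj
    have htop : g'.coeff (n - (j + 1)) = 1 := by
      rw [hrec, coeff_eq_zero_of_natDegree_lt (p := g') (n := n - (j+1) + 1) (by omega), mul_zero, add_zero,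
        ← h1]
      congr 1
      omega
    refine ⟨htop, fun u => ?_⟩
    induction u with
    | zero =>
      intro _
      rw [Nat.sub_zero, htop]
      simpa using one_mem_filt x
    | succ u ihu =>
      intro hu
      rw [hrec]
      refine add_mem ?_ ?_
      · have := h2 (u + 1) (by omega)
        rw [show n - j - (u + 1) = n - (j + 1) - (u + 1) + 1 by omega] at this
        refine filt_mono x ?_ this
        gcongr
        omega
      · have := filt_mul x (pow_mem_filt (k := k) x ⟨j, hj⟩ r) (ihu (by omega))
        rw [show n - (j + 1) - u = n - (j + 1) - (u + 1) + 1 by omega] at this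
        convert this using 1
        simp only
        congr 1 <;> ring

open Polynomial in
theorem red_mem (r : ℕ) (hr : 1 ≤ r) (x : Fin n → A) (h : ∏ j, (X - C (x j ^ r)) = X ^ n) (j : Fin n) :
    x j ^ (r * (n - j)) ∈ Submodule.span k (mon x ''
      {a | ∑ i, a i = r * (n - j) ∧ wt a < (j + 1) * (r * (n - j))}) := by
  obtain ⟨h1, h2⟩ := gpoly_coeff (k := k) r x h j j.2.le
  have he : (gpoly (fun i => x i ^ r) j).eval (x j ^ r) = 0 := by
    rw [gpoly_succ]; simp
  rw [eval_eq_sum_range' (n := n - j + 1) (Nat.lt_succ_of_le (gpoly_natDegree _ _ j.2.le)),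
    Finset.sum_range_succ, h1, one_mul, ← pow_mul, add_comm, ← eq_neg_iff_add_eq_zero] at he
  rw [he]
  refine neg_mem (sum_mem fun s hs => ?_)
  have hs' := Finset.mem_range.1 hs
  have h3 := h2 (n - j - s) (by omega)
  rw [show n - j - (n - j - s) = s by omega] at h3
  have h4 := filt_mul x h3 (pow_mem_filt (k := k) x j (r * s))
  rw [← pow_mul]
  obtain ⟨u, hu⟩ : ∃ u, n - j.1 = s + (u + 1) := ⟨n - j - s - 1, by omega⟩
  refine Submodule.span_mono (Set.image_mono ?_) h4
  rintro a ⟨ha, ha'⟩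
  rw [hu] at ha ha' ⊢
  rw [Nat.add_sub_cancel_left] at ha ha'
  refine ⟨?_, ?_⟩
  · rw [ha]; ring
  · refine lt_of_le_of_lt ha' ?_
    have : 0 < r * (u + 1) := by positivity
    nlinarith
end red


theorem SL_final {k A : Type*} [Field k] [CommRing A] [Algebra k A] [FiniteDimensional k A]
    (G : ℕ → Submodule k A) (N : ℕ) (l : A) (hmul : ∀ i, ∀ v ∈ G i, l * v ∈ G (i + 1))
    (hsym : ∀ i, i ≤ N → Module.finrank k (G i) = Module.finrank k (G (N - i)))
    (hzero : ∀ i, N < i → G i = ⊥)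
    (hinj : ∀ i, 2 * i ≤ N → ∀ v ∈ G i, l ^ (N - 2 * i) * v = 0 → v = 0) (i m : ℕ) :
    Module.finrank k ((G i).map (LinearMap.mulLeft k (l ^ m))) =
      min (Module.finrank k (G i)) (Module.finrank k (G (i + m))) := by
  have hpow : ∀ m i, (G i).map (LinearMap.mulLeft k (l ^ m)) ≤ G (i + m) := by
    intro m i
    induction m with
    | zero => simp [LinearMap.mulLeft_one, Submodule.map_id]
    | succ m ih =>
      rintro _ ⟨v, hv, rfl⟩
      have := hmul _ _ (ih ⟨v, hv, rfl⟩)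
      simpa [pow_succ', mul_assoc, add_assoc] using this
  have hinj2 : ∀ i m, 2 * i + m ≤ N →
      Module.finrank k ((G i).map (LinearMap.mulLeft k (l ^ m))) = Module.finrank k (G i) := by
    intro i m h
    rw [← LinearMap.range_domRestrict]
    apply LinearMap.finrank_range_of_inj
    rw [← LinearMap.ker_eq_bot, LinearMap.ker_eq_bot']
    rintro ⟨v, hv⟩ h0
    have h0' : l ^ m * v = 0 := h0
    have := hinj i (by omega) v hv (by
      rw [show N - 2 * i = (N - 2 * i - m) + m by omega, pow_add, mul_assoc, h0', mul_zero])
    exact Subtype.ext this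
  have hle : Module.finrank k ((G i).map (LinearMap.mulLeft k (l ^ m))) ≤ Module.finrank k (G i) :=
    Submodule.finrank_map_le _ _
  by_cases h : 2 * i + m ≤ N
  · have h1 := hinj2 i m h
    have h2 := Submodule.finrank_mono (hpow m i)
    omega
  · by_cases h' : N < i + m
    · have h2 := Submodule.finrank_mono (hpow m i)
      rw [hzero _ h', finrank_bot] at h2
      rw [hzero _ h', finrank_bot]
      omega
    · obtain ⟨j, hj⟩ : ∃ j, j = N - (i + m) := ⟨_, rfl⟩
      have h1 := hinj2 j (N - 2 * j) (by omega)
      have h3 : (G j).map (LinearMap.mulLeft k (l ^ (N - 2 * j))) ≤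
          (G i).map (LinearMap.mulLeft k (l ^ m)) := by
        rintro _ ⟨v, hv, rfl⟩
        refine ⟨l ^ (i - j) * v, ?_, ?_⟩
        · have := hpow (i - j) j ⟨v, hv, rfl⟩
          rwa [show j + (i - j) = i by omega] at this
        · simp only [LinearMap.mulLeft_apply]
          rw [← mul_assoc, ← pow_add]
          congr 2
          omega
      have h4 := Submodule.finrank_mono h3
      have h5 := Submodule.finrank_mono (hpow m i)
      have h6 := hsym j (by omega)
      rw [show N - j = i + m by omega] at h6
      omega

theorem semicont {k ι κ : Type*} [Field k] [Fintype ι] [DecidableEq ι] [Fintype κ] [DecidableEq κ]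
    (M : Matrix κ ι (Polynomial k))
    (h : Function.Injective (M.map (Polynomial.evalRingHom 0)).mulVec) :
    ∃ q : Polynomial k, q.eval 0 ≠ 0 ∧ ∀ t, q.eval t ≠ 0 →
      Function.Injective (M.map (Polynomial.evalRingHom t)).mulVec := by
  obtain ⟨g, hg⟩ := LinearMap.exists_leftInverse_of_injective
    (Matrix.mulVecLin (M.map (Polynomial.evalRingHom 0))) (LinearMap.ker_eq_bot.2 h)
  have hG : LinearMap.toMatrix' g * M.map (Polynomial.evalRingHom 0) = 1 := by
    have := congrArg LinearMap.toMatrix' hg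
    rw [LinearMap.toMatrix'_comp, ← Matrix.toLin'_apply', LinearMap.toMatrix'_toLin', LinearMap.toMatrix'_id] at this
    exact this
  have key : ∀ t, ((LinearMap.toMatrix' g).map Polynomial.C * M).det.eval t =
      (LinearMap.toMatrix' g * M.map (Polynomial.evalRingHom t)).det := by
    intro t
    rw [← Polynomial.coe_evalRingHom, RingHom.map_det, RingHom.mapMatrix_apply, Matrix.map_mul]
    congr 2
    ext; simp
  refine ⟨((LinearMap.toMatrix' g).map Polynomial.C * M).det, ?_, ?_⟩
  · rw [key, hG]; simp
  · intro t ht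
    rw [key] at ht
    have h1 := Matrix.mulVec_injective_of_isUnit ((Matrix.isUnit_iff_isUnit_det _).2 ht.isUnit)
    intro u v huv
    apply h1
    change Matrix.mulVec _ u = Matrix.mulVec _ v
    rw [← Matrix.mulVec_mulVec, ← Matrix.mulVec_mulVec, huv]

section box
variable {k A : Type*} [Field k] [CommRing A] [Algebra k A] {n : ℕ} (d : Fin n → ℕ)

theorem std_span (x : Fin n → A) (hred : ∀ j, x j ^ d j ∈ Submodule.span k (mon x ''
      {a | ∑ i, a i = d j ∧ wt a < (j + 1) * d j})) (a : Fin n → ℕ) :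
    mon x a ∈ Submodule.span k (mon x '' {c | (∀ j, c j < d j) ∧ ∑ j, c j = ∑ j, a j ∧
      (c = a ∨ wt c < wt a)}) := by
  induction hw : wt a using Nat.strong_induction_on generalizing a with
  | _ w ih =>
  subst hw
  by_cases h : ∀ j, a j < d j
  · exact Submodule.subset_span ⟨a, ⟨h, rfl, Or.inl rfl⟩, rfl⟩
  push Not at h
  obtain ⟨j, hj⟩ := h
  obtain ⟨a', rfl⟩ : ∃ a' : Fin n → ℕ, a = a' + Pi.single j (d j) := by
    refine ⟨a - Pi.single j (d j), ?_⟩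
    ext i
    by_cases hi : i = j
    · subst hi; simp; omega
    · simp [hi]
  rw [mon_add, mon_single]
  have h1 : mon x a' * x j ^ d j ∈ (Submodule.span k (mon x ''
      {a | ∑ i, a i = d j ∧ wt a < (j + 1) * d j})).map (LinearMap.mulLeft k (mon x a')) :=
    ⟨_, hred j, rfl⟩
  rw [Submodule.map_span] at h1
  refine Submodule.span_le.2 ?_ h1
  rintro _ ⟨_, ⟨c, ⟨hc, hc'⟩, rfl⟩, rfl⟩
  rw [LinearMap.mulLeft_apply, ← mon_add]
  have hlt : wt (a' + c) < wt (a' + Pi.single j (d j)) := by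
    rw [wt_add, wt_add, wt_single]; omega
  refine Submodule.span_mono (Set.image_mono ?_) (ih _ hlt _ rfl)
  rintro e ⟨he, he', he''⟩
  refine ⟨he, ?_, Or.inr ?_⟩
  · rw [he']; simp [Finset.sum_add_distrib, hc]
  · rcases he'' with rfl | h
    · exact hlt
    · exact h.trans hlt

/-- inclusion of the box -/
def bval (a : (j : Fin n) → Fin (d j)) : Fin n → ℕ := fun j => a j

theorem bval_inj : Function.Injective (bval d) := fun a b h => by
  ext j; exact congrFun h j

open Classical in
/-- monomial multiplication matrix -/
noncomputable def L0 (k : Type*) [Field k] :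
    Matrix ((j : Fin n) → Fin (d j)) ((j : Fin n) → Fin (d j)) k :=
  fun c a => ∑ j, if bval d c = bval d a + Pi.single j 1 then 1 else 0

theorem L0_mulVec (f : (Fin n → ℕ) → k) :
    (fun c => opE k f (bval d c)) = (L0 d k).mulVec (fun a => f (bval d a)) := by
  classical
  ext c
  rw [opE_apply, Matrix.mulVec, dotProduct]
  simp only [L0, Finset.sum_mul]
  rw [Finset.sum_comm]
  refine Finset.sum_congr rfl fun j _ => ?_
  split_ifs with h
  · let a : (j : Fin n) → Fin (d j) := fun i => ⟨(bval d c - Pi.single j 1 : Fin n → ℕ) i,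
      lt_of_le_of_lt (Nat.sub_le _ _) (c i).2⟩
    have ha : bval d a = bval d c - Pi.single j 1 := rfl
    rw [Finset.sum_eq_single a]
    · rw [ha, sub_add_single _ j h]; simp
    · intro b _ hb
      rw [if_neg, zero_mul]
      intro h1
      apply hb
      apply bval_inj d
      rw [ha, h1]
      simp
    · simp
  · symm
    refine Finset.sum_eq_zero fun a _ => ?_
    rw [if_neg, zero_mul]
    intro h1
    apply h
    rw [h1]
    simp

theorem L0_inj [CharZero k] (hd : ∀ j, 0 < d j) (i m : ℕ)
    (h : 2 * i + m ≤ ∑ j, (d j - 1)) (u : ((j : Fin n) → Fin (d j)) → k)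
    (hu : ∀ a, u a ≠ 0 → ∑ j, bval d a j = i) (h0 : ((L0 d k) ^ m).mulVec u = 0) : u = 0 := by
  classical
  let f : (Fin n → ℕ) → k := fun c => if h : ∀ j, c j < d j then u (fun j => ⟨c j, h j⟩) else 0
  have hf : (fun a => f (bval d a)) = u := by
    ext a
    have : ∀ j, bval d a j < d j := fun j => (a j).2
    simp only [f, dif_pos this]
    rfl
  have hm : ∀ m, (fun c => ((opE k) ^ m) f (bval d c)) = ((L0 d k) ^ m).mulVec u := by
    intro m
    induction m with
    | zero => simpa using hf
    | succ m ih =>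
      rw [pow_succ', pow_succ', ← Matrix.mulVec_mulVec, ← ih, ← L0_mulVec]
      rfl
  have hJ : f ∈ fnJ k d := by
    refine op_inj k d hd i m h f ?_ ?_
    · intro c hc
      simp only [f] at hc
      split_ifs at hc with hh
      · exact hu _ hc
      · exact absurd rfl hc
    · intro c hc
      have := congrFun (hm m) (fun j => ⟨c j, hc j⟩)
      rw [h0] at this
      exact this
  ext a
  have := hJ (bval d a) (fun j => (a j).2)
  rw [← hf]
  exact this

end box


section ext0
variable {k B : Type*} [Field k] [Fintype B] {p : B → Prop} [DecidablePred p]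

/-- extension by zero -/
def ext0 (g : {a // p a} → k) (a : B) : k := if h : p a then g ⟨a, h⟩ else 0

theorem sum_ext0 {M : Type*} [AddCommMonoid M] (g : {a // p a} → k) (F : B → k → M)
    (hF : ∀ a, F a 0 = 0) : ∑ a, F a (ext0 g a) = ∑ a : {a // p a}, F a.1 (g a) := by
  symm
  refine Finset.sum_of_injOn Subtype.val Subtype.val_injective.injOn (by simp) ?_ ?_
  · intro a _ ha
    simp only [ext0]
    rw [dif_neg, hF]
    intro h
    exact ha ⟨⟨a, h⟩, by simp, rfl⟩
  · rintro ⟨a, ha⟩ _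
    simp only [ext0]
    rw [dif_pos ha]

theorem submatrix_mulVec_ext (g : {a // p a} → k) (M : Matrix B B k) :
    (M.submatrix id (Subtype.val : {a // p a} → _)).mulVec g = M.mulVec (ext0 g) := by
  ext c
  simp only [Matrix.mulVec, dotProduct, Matrix.submatrix_apply, id]
  exact (sum_ext0 g (fun a z => M c a * z) (by simp)).symm

theorem ext0_eq_zero (g : {a // p a} → k) (h : ext0 g = 0) : g = 0 := by
  ext ⟨a, ha⟩
  have := congrFun h a
  simpa [ext0, ha] using this

end ext0

section main
variable {k A : Type*} [Field k] [CommRing A] [Algebra k A] {n : ℕ}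

variable (k) in
/-- graded piece -/
def mgrade (x : Fin n → A) (i : ℕ) : Submodule k A :=
  Submodule.span k (mon x '' {a | ∑ j, a j = i})

theorem abstract_SL [CharZero k] (d : Fin n → ℕ) (hd : ∀ j, 0 < d j) (x : Fin n → A)
    (hgen : Submodule.span k (Set.range (mon x)) = ⊤)
    (hred : ∀ j, x j ^ d j ∈ Submodule.span k (mon x ''
      {a | ∑ i, a i = d j ∧ wt a < (j + 1) * d j}))
    (hind : LinearIndependent k (fun a : (j : Fin n) → Fin (d j) => mon x (bval d a))) :
    ∃ t : k, ∀ i m : ℕ,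
      Module.finrank k ((mgrade k x i).map (LinearMap.mulLeft k ((∑ j : Fin n, t ^ (j.1 + 1) • x j) ^ m))) =
      min (Module.finrank k (mgrade k x i)) (Module.finrank k (mgrade k x (i + m))) := by
  classical
  have hstd := std_span (k := k) d x hred
  -- basis
  have hspan : ⊤ ≤ Submodule.span k (Set.range (fun a : (j : Fin n) → Fin (d j) => mon x (bval d a))) := by
    rw [← hgen, Submodule.span_le]
    rintro _ ⟨a, rfl⟩
    refine Submodule.span_mono ?_ (hstd a)
    rintro _ ⟨c, ⟨hc, -⟩, rfl⟩
    exact ⟨fun j => ⟨c j, hc j⟩, rfl⟩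
  let b := Module.Basis.mk hind hspan
  have hb : ∀ a, b a = mon x (bval d a) := fun a => by simp [b]
  have : FiniteDimensional k A := b.finiteDimensional_of_finite
  let Bi : ℕ → Type := fun i => {a : (j : Fin n) → Fin (d j) // ∑ j, bval d a j = i}
  -- graded pieces
  have hgrade : ∀ i, mgrade k x i = Submodule.span k (Set.range fun a : Bi i => b a.1) := by
    intro i
    apply le_antisymm
    · refine Submodule.span_le.2 ?_
      rintro _ ⟨a, rfl, rfl⟩
      refine Submodule.span_mono ?_ (hstd a)
      rintro _ ⟨c, ⟨hc, hc', -⟩, rfl⟩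
      exact ⟨⟨fun j => ⟨c j, hc j⟩, hc'⟩, hb _⟩
    · refine Submodule.span_mono ?_
      rintro _ ⟨a, rfl⟩
      exact ⟨bval d a.1, a.2, (hb _).symm⟩
  have hfin : ∀ i, Module.finrank k (mgrade k x i) = Fintype.card (Bi i) := by
    intro i
    rw [hgrade]
    exact finrank_span_eq_card (b.linearIndependent.comp _ Subtype.val_injective)
  obtain ⟨N, hN⟩ : ∃ N, N = ∑ j, (d j - 1) := ⟨_, rfl⟩
  -- structure constants
  have hrepr : ∀ j a c, b.repr (x j * b a) c ≠ 0 →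
      (bval d c = bval d a + Pi.single j 1 ∨ wt (bval d c) < wt (bval d a) + (j + 1)) := by
    intro j a c h
    have h1 := hstd (bval d a + Pi.single j 1)
    rw [mon_add, mon_single, pow_one, mul_comm, ← hb] at h1
    have h2 : x j * b a ∈ Submodule.span k (b '' {c | bval d c = bval d a + Pi.single j 1 ∨
        wt (bval d c) < wt (bval d a) + (j + 1)}) := by
      refine Submodule.span_mono ?_ h1
      rintro _ ⟨c, ⟨hc, -, hc'⟩, rfl⟩
      rw [wt_add, wt_single, mul_one] at hc'
      exact ⟨fun j => ⟨c j, hc j⟩, hc', hb _⟩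
    rw [b.mem_span_image] at h2
    exact h2 (Finsupp.mem_support_iff.2 h)
  have hrepr2 : ∀ j a c, bval d c = bval d a + Pi.single j 1 →
      x j * b a = b c := by
    intro j a c h
    rw [hb, hb, h, mon_add, mon_single, pow_one, mul_comm]
  let L : Matrix ((j : Fin n) → Fin (d j)) ((j : Fin n) → Fin (d j)) (Polynomial k) :=
    fun c a => ∑ j : Fin n, Polynomial.C (b.repr (x j * b a) c) *
      Polynomial.X ^ (wt (bval d a) + (j.1 + 1) - wt (bval d c))
  have hL0 : L.map (Polynomial.evalRingHom 0) = L0 d k := by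
    ext c a
    rw [Matrix.map_apply]
    simp only [L, L0, map_sum, map_mul, map_pow]
    refine Finset.sum_congr rfl fun j _ => ?_
    simp only [Polynomial.coe_evalRingHom, Polynomial.eval_C, Polynomial.eval_X]
    split_ifs with h
    · rw [hrepr2 j a c h, h, wt_add, wt_single]
      simp
    · by_cases h0 : b.repr (x j * b a) c = 0
      · simp [h0]
      · rcases hrepr j a c h0 with h1 | h1
        · exact absurd h1 h
        · rw [zero_pow (by omega), mul_zero]
  -- the operator with parameter
  let l : k → A := fun t => ∑ j : Fin n, t ^ (j.1 + 1) • x j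
  let Dt : k → (((j : Fin n) → Fin (d j)) → k) → A := fun t f => ∑ a, f a • t ^ wt (bval d a) • b a
  have hDL : ∀ t f, Dt t ((L.map (Polynomial.evalRingHom t)).mulVec f) = l t * Dt t f := by
    intro t f
    have hcol : ∀ a, ∑ c, (L.map (Polynomial.evalRingHom t)) c a • t ^ wt (bval d c) • b c =
        l t * (t ^ wt (bval d a) • b a) := by
      intro a
      have h1 : ∀ j : Fin n, (t ^ (j.1 + 1) • x j) * (t ^ wt (bval d a) • b a) =
          ∑ c, (b.repr (x j * b a) c * t ^ (wt (bval d a) + (j.1 + 1) - wt (bval d c))) •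
            t ^ wt (bval d c) • b c := by
        intro j
        rw [smul_mul_smul_comm, ← pow_add]
        conv_lhs => rw [← b.sum_repr (x j * b a)]
        rw [Finset.smul_sum]
        refine Finset.sum_congr rfl fun c _ => ?_
        by_cases h0 : b.repr (x j * b a) c = 0
        · simp [h0]
        · have hle : wt (bval d c) ≤ wt (bval d a) + (j.1 + 1) := by
            rcases hrepr j a c h0 with h | h
            · rw [h, wt_add, wt_single, mul_one]
            · exact h.le
          rw [smul_smul, smul_smul, mul_assoc, ← pow_add, Nat.sub_add_cancel hle, mul_comm,
            add_comm (j.1 + 1)]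
      simp only [l, Finset.sum_mul, h1]
      rw [Finset.sum_comm]
      refine Finset.sum_congr rfl fun c _ => ?_
      rw [← Finset.sum_smul, Matrix.map_apply]
      congr 1
      simp [L, Polynomial.eval_finset_sum]
    simp only [Dt, Finset.mul_sum, Matrix.mulVec, dotProduct, Finset.sum_smul]
    rw [Finset.sum_comm]
    refine Finset.sum_congr rfl fun a _ => ?_
    rw [mul_smul_comm, ← hcol, Finset.smul_sum]
    refine Finset.sum_congr rfl fun c _ => ?_
    rw [smul_smul, smul_smul, smul_smul, mul_comm (f a)]
  have hDLm : ∀ t m f, Dt t (((L.map (Polynomial.evalRingHom t)) ^ m).mulVec f) = l t ^ m * Dt t f := by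
    intro t m
    induction m with
    | zero => intro f; simp
    | succ m ih =>
      intro f
      rw [pow_succ', ← Matrix.mulVec_mulVec, hDL, ih, pow_succ', mul_assoc]
  have hDinj : ∀ t f, t ≠ 0 → Dt t f = 0 → f = 0 := by
    intro t f ht h
    have h1 := Fintype.linearIndependent_iff.1 b.linearIndependent (fun a => f a * t ^ wt (bval d a))
      (by simpa [Dt, smul_smul] using h)
    ext a
    exact (mul_eq_zero.1 (h1 a)).resolve_right (pow_ne_zero _ ht)
  -- generic injectivity
  have hq : ∀ i, ∃ q : Polynomial k, q.eval 0 ≠ 0 ∧ ∀ t, q.eval t ≠ 0 → 2 * i ≤ N →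
      Function.Injective (((L ^ (N - 2 * i)).submatrix id (Subtype.val : Bi i → _)).map
        (Polynomial.evalRingHom t)).mulVec := by
    intro i
    by_cases hi : 2 * i ≤ N
    · obtain ⟨q, hq0, hq⟩ := semicont ((L ^ (N - 2 * i)).submatrix id (Subtype.val : Bi i → _)) (by
        rw [← Matrix.submatrix_map, Matrix.map_pow, hL0]
        rw [← Matrix.coe_mulVecLin, ← LinearMap.ker_eq_bot, LinearMap.ker_eq_bot']
        intro g hg
        rw [Matrix.mulVecLin_apply, submatrix_mulVec_ext] at hg
        have := L0_inj d hd i (N - 2 * i) (by omega) _ ?_ hg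
        · exact ext0_eq_zero _ this
        · intro a ha
          by_contra hne
          exact ha (dif_neg hne))
      exact ⟨q, hq0, fun t ht _ => hq t ht⟩
    · exact ⟨1, by simp, fun t _ h => absurd h hi⟩
  choose q hq0 hq using hq
  obtain ⟨t, ht⟩ : ∃ t, (Polynomial.X * ∏ i ∈ Finset.range (N + 1), q i).eval t ≠ 0 := by
    by_contra! h
    have h1 : Polynomial.X * ∏ i ∈ Finset.range (N + 1), q i = 0 :=
      Polynomial.funext fun t => by rw [h t]; simp
    have h2 := (mul_eq_zero.1 h1).resolve_left Polynomial.X_ne_zero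
    obtain ⟨i, _, hi⟩ := Finset.prod_eq_zero_iff.1 h2
    apply hq0 i
    rw [hi]; simp
  rw [Polynomial.eval_mul, Polynomial.eval_X, Polynomial.eval_prod] at ht
  have ht0 := left_ne_zero_of_mul ht
  have htq := Finset.prod_ne_zero_iff.1 (right_ne_zero_of_mul ht)
  refine ⟨t, SL_final (mgrade k x) N (l t) ?_ ?_ ?_ ?_⟩
  · intro i v hv
    have h1 : l t * v ∈ (mgrade k x i).map (LinearMap.mulLeft k (l t)) := ⟨v, hv, rfl⟩
    unfold mgrade at h1
    rw [Submodule.map_span] at h1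
    refine Submodule.span_le.2 ?_ h1
    rintro _ ⟨_, ⟨a, rfl, rfl⟩, rfl⟩
    simp only [LinearMap.mulLeft_apply, l, Finset.sum_mul]
    refine sum_mem fun j _ => ?_
    rw [smul_mul_assoc]
    refine Submodule.smul_mem _ _ (Submodule.subset_span ⟨a + Pi.single j 1, sum_add_single a j, ?_⟩)
    rw [mon_add, mon_single, pow_one, mul_comm]
  · intro i hi
    rw [hfin, hfin]
    have hrev : ∀ a : (j : Fin n) → Fin (d j),
        ∑ j, bval d (fun j => (a j).rev) j + ∑ j, bval d a j = N := by
      intro a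
      rw [← Finset.sum_add_distrib, hN]
      refine Finset.sum_congr rfl fun j _ => ?_
      have := (a j).2
      simp only [bval, Fin.val_rev]
      omega
    refine Fintype.card_congr
      { toFun := fun a => ⟨fun j => (a.1 j).rev, by have := hrev a.1; have := a.2; omega⟩
        invFun := fun a => ⟨fun j => (a.1 j).rev, by have := hrev a.1; have := a.2; omega⟩
        left_inv := fun a => by simp
        right_inv := fun a => by simp }
  · intro i hi
    rw [hgrade, Submodule.span_eq_bot]
    rintro _ ⟨a, rfl⟩
    exfalso
    have h1 : ∑ j, bval d a.1 j ≤ N := by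
      rw [hN]
      refine Finset.sum_le_sum fun j _ => ?_
      have := (a.1 j).2
      simp only [bval]
      omega
    have := a.2
    omega
  · intro i hi v hv h0
    rw [hgrade, Submodule.mem_span_range_iff_exists_fun] at hv
    obtain ⟨g, rfl⟩ := hv
    let g' : Bi i → k := fun a => g a * (t ^ wt (bval d a.1))⁻¹
    have h1 : ∑ a : Bi i, g a • b a.1 = Dt t (ext0 g') := by
      simp only [Dt]
      rw [sum_ext0 g' (fun a z => z • t ^ wt (bval d a) • b a) (by simp)]
      refine Finset.sum_congr rfl fun a _ => ?_
      simp only [g']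
      rw [smul_smul, inv_mul_cancel_right₀ (pow_ne_zero _ ht0)]
    rw [h1, ← hDLm] at h0
    have h2 := hDinj t _ ht0 h0
    rw [← submatrix_mulVec_ext] at h2
    have h3 := hq i t (htq i (by simp; omega)) hi
    rw [← Matrix.submatrix_map, Matrix.map_pow] at h3
    have h4 : g' = 0 := h3 (by rw [h2, Matrix.mulVec_zero])
    rw [h1, h4]
    refine Finset.sum_eq_zero fun a _ => ?_
    have : ext0 (0 : Bi i → k) a = 0 := by simp [ext0]
    rw [this, zero_smul]
end main


section fin
variable (k : Type*) [Field k] (n : ℕ) (I : Ideal (MvPolynomial (Fin n) k))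

theorem mk_monomial (s : Fin n →₀ ℕ) (c : k) :
    Ideal.Quotient.mkₐ k I (MvPolynomial.monomial s c) =
      c • mon (fun j => Ideal.Quotient.mkₐ k I (MvPolynomial.X j)) (fun j => s j) := by
  rw [MvPolynomial.monomial_eq, Finsupp.prod_fintype _ _ (by simp), ← MvPolynomial.smul_eq_C_mul,
    map_smul, map_prod]
  simp [mon]

theorem quotGrade_eq (i : ℕ) : quotGrade k n I i =
    mgrade k (fun j => Ideal.Quotient.mkₐ k I (MvPolynomial.X j)) i := by
  apply le_antisymm
  · rintro _ ⟨p, hp, rfl⟩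
    have hp' : p.IsHomogeneous i := hp
    rw [p.as_sum, map_sum]
    refine sum_mem fun s hs => ?_
    rw [AlgHom.toLinearMap_apply, mk_monomial]
    refine Submodule.smul_mem _ _ (Submodule.subset_span ⟨_, ?_, rfl⟩)
    have := hp' (MvPolynomial.mem_support_iff.1 hs)
    have h2 : s.degree = i := by rw [Finsupp.degree_eq_weight_one]; exact this
    rw [Finsupp.degree_eq_sum] at h2
    exact h2
  · refine Submodule.span_le.2 ?_
    rintro _ ⟨a, rfl, rfl⟩
    refine ⟨MvPolynomial.monomial (Finsupp.equivFunOnFinite.symm a) 1, ?_, ?_⟩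
    · apply MvPolynomial.isHomogeneous_monomial
      rw [Finsupp.degree_eq_sum]
      rfl
    · rw [AlgHom.toLinearMap_apply, mk_monomial, one_smul]
      rfl

theorem mon_span : Submodule.span k
    (Set.range (mon (fun j => Ideal.Quotient.mkₐ k I (MvPolynomial.X j)))) = ⊤ := by
  rw [eq_top_iff]
  intro v _
  obtain ⟨p, rfl⟩ := Ideal.Quotient.mkₐ_surjective k I v
  rw [p.as_sum, map_sum]
  refine sum_mem fun s hs => ?_
  rw [mk_monomial]
  exact Submodule.smul_mem _ _ (Submodule.subset_span ⟨_, rfl⟩)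

theorem aeval_esymmPow {D : Type*} [CommRing D] [Algebra k D] (r i : ℕ) (x : Fin n → D) :
    MvPolynomial.aeval x (esymmPow k n r i) =
      ∑ s ∈ Finset.powersetCard i (Finset.univ : Finset (Fin n)), ∏ j ∈ s, x j ^ r := by
  simp [esymmPow, map_sum, map_prod]

end fin

theorem coinvariant_algebra_Grn_strong_lefschetz
    (k : Type*) [Field k] [CharZero k] (r n : ℕ) (hr : 1 ≤ r) (hn : 1 ≤ n) :
    ∃ ℓ ∈ quotGrade k n (Ideal.span (Set.range fun i : Fin n => esymmPow k n r (i + 1))) 1,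
      ∀ i m : ℕ,
        Module.finrank k
          ((quotGrade k n (Ideal.span (Set.range fun i : Fin n => esymmPow k n r (i + 1))) i).map
            (LinearMap.mulLeft k (ℓ ^ m))) =
        min (Module.finrank k
            (quotGrade k n (Ideal.span (Set.range fun i : Fin n => esymmPow k n r (i + 1))) i))
          (Module.finrank k
            (quotGrade k n (Ideal.span (Set.range fun i : Fin n => esymmPow k n r (i + 1)))
              (i + m))) := by
  set I := Ideal.span (Set.range fun i : Fin n => esymmPow k n r (i + 1)) with hI
  let x : Fin n → MvPolynomial (Fin n) k ⧸ I := fun j => Ideal.Quotient.mkₐ k I (MvPolynomial.X j)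
  have hprod : ∏ j, (Polynomial.X - Polynomial.C (x j ^ r)) = Polynomial.X ^ n := by
    rw [prod_eq_iff n (fun j => x j ^ r)]
    intro i
    have h1 : Ideal.Quotient.mkₐ k I (esymmPow k n r (i + 1)) = 0 :=
      Ideal.Quotient.eq_zero_iff_mem.2 (Ideal.subset_span ⟨i, rfl⟩)
    rw [← h1]
    simp [esymmPow, map_sum, map_prod, x]
  have hind : LinearIndependent k (fun a : (j : Fin n) → Fin (r * (n - j)) =>
      mon x (bval (fun j : Fin n => r * (n - j)) a)) := by
    obtain ⟨D, _, _, y, hy, hl⟩ := tower r hr n k (Polynomial.X ^ n) (Polynomial.monic_X_pow n)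
      (Polynomial.natDegree_X_pow n)
    rw [Polynomial.map_pow, Polynomial.map_X, prod_eq_iff n (fun j => y j ^ r)] at hy
    let φ : (MvPolynomial (Fin n) k ⧸ I) →ₐ[k] D := Ideal.Quotient.liftₐ I (MvPolynomial.aeval y) (by
      intro p hp
      have : I ≤ RingHom.ker (MvPolynomial.aeval (R := k) y) := by
        rw [hI, Ideal.span_le]
        rintro _ ⟨i, rfl⟩
        change MvPolynomial.aeval y _ = 0
        rw [aeval_esymmPow]
        exact hy i
      exact this hp)
    have hφ : ∀ j, φ (x j) = y j := by
      intro j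
      change MvPolynomial.aeval y (MvPolynomial.X j) = y j
      simp
    refine LinearIndependent.of_comp φ.toLinearMap ?_
    have he : (φ.toLinearMap ∘ fun a : (j : Fin n) → Fin (r * (n - j)) =>
        mon x (bval (fun j : Fin n => r * (n - j)) a)) = fun a => ∏ j, y j ^ (a j : ℕ) := by
      funext a
      simp [mon, bval, hφ]
    rw [he]
    exact hl
  obtain ⟨t, ht⟩ := abstract_SL (k := k) (fun j : Fin n => r * (n - j))
    (fun j => Nat.mul_pos (by omega) (by omega)) x (mon_span k n I)
    (fun j => red_mem r hr x hprod j) hind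
  refine ⟨∑ j : Fin n, t ^ (j.1 + 1) • x j, ?_, ?_⟩
  · rw [quotGrade_eq]
    refine sum_mem fun j _ => Submodule.smul_mem _ _ (Submodule.subset_span
      ⟨Pi.single j 1, by simp, ?_⟩)
    rw [mon_single, pow_one]
  · intro i m
    rw [quotGrade_eq k n I i, quotGrade_eq k n I (i + m)]
    exact ht i m
end

section
/- Let k be a field of characteristic 0, fix integers r ≥ 1 and n ≥ 2, and let e_i(r,n) = e_i(x_1^r,…,x_n^r). Then C = k[x_1,…,x_n]/(e_1(r,n),…,e_n(r,n)) is a free extension of A = k[t]/(t^{rn}) with fiber B = k[x_1,…,x_{n−1}]/(e_1(r,n−1),…,e_{n−1}(r,n−1)): the map ι : A → C, t ↦ x_n, is injective and makes C a free A-module, and the map π : C → B induced by x_i ↦ x_i for i < n and x_n ↦ 0 is surjective with ker π = ι(m_A)·C. -/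
set_option synthInstance.maxHeartbeats 1000000
set_option maxHeartbeats 1000000

/-- The defining ideal `(e_1(r,n),…,e_n(r,n))` of the `G(r,1,n)`-coinvariant algebra. -/
noncomputable def coinvIdeal (k : Type*) [CommRing k] (n r : ℕ) :
    Ideal (MvPolynomial (Fin n) k) :=
  Ideal.span (Set.range fun i : Fin n => esymmPow k n r (i + 1))

universe u

open Polynomial in
noncomputable def splitPoly {S : Type*} [CommRing S] (r m : ℕ) (x : Fin m → S) : Polynomial S :=
  ∏ i, (X - C (x i ^ r))

theorem splitPoly_map {S T : Type*} [CommRing S] [CommRing T] (r m : ℕ) (x : Fin m → S)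
    (φ : S →+* T) : (splitPoly r m x).map φ = splitPoly r m (fun i => φ (x i)) := by
  simp [splitPoly, Polynomial.map_prod]

theorem splitPoly_succ {S : Type*} [CommRing S] (r m : ℕ) (x : Fin (m + 1) → S) :
    splitPoly r (m + 1) x =
      splitPoly r m (fun i => x i.castSucc) *
        (Polynomial.X - Polynomial.C (x (Fin.last m) ^ r)) := by
  simp [splitPoly, Fin.prod_univ_castSucc]

noncomputable def splitIdeal {A : Type*} [CommRing A] (r m : ℕ) (f : Polynomial A) :
    Ideal (MvPolynomial (Fin m) A) :=
  Ideal.span (Set.range fun j : ℕ =>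
    (f.map (MvPolynomial.C) - splitPoly r m (fun i => (MvPolynomial.X i : MvPolynomial (Fin m) A))).coeff j)

theorem splitIdeal_le_ker {A R : Type*} [CommRing A] [CommRing R] (r m : ℕ) (f : Polynomial A)
    (φ : MvPolynomial (Fin m) A →+* R) :
    splitIdeal r m f ≤ RingHom.ker φ ↔
      f.map (φ.comp MvPolynomial.C) = splitPoly r m (fun i => φ (MvPolynomial.X i)) := by
  rw [splitIdeal, Ideal.span_le, Set.range_subset_iff, ← Polynomial.map_map, ← splitPoly_map,
    ← sub_eq_zero, ← Polynomial.map_sub, Polynomial.ext_iff]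
  simp only [SetLike.mem_coe, RingHom.mem_ker, Polynomial.coeff_map, Polynomial.coeff_zero]

theorem splitIdeal_mk {A : Type*} [CommRing A] (r m : ℕ) (f : Polynomial A) :
    f.map ((Ideal.Quotient.mk (splitIdeal r m f)).comp MvPolynomial.C) =
      splitPoly r m (fun i => Ideal.Quotient.mk (splitIdeal r m f) (MvPolynomial.X i)) :=
  (splitIdeal_le_ker r m f _).1 (by rw [Ideal.mk_ker])

theorem expand_eval₂' {A R : Type*} [CommRing A] [CommRing R] (φ : A →+* R) (x : R) (r : ℕ)
    (f : Polynomial A) : (Polynomial.expand A r f).eval₂ φ x = f.eval₂ φ (x ^ r) := by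
  rw [← Polynomial.eval_map, Polynomial.map_expand, Polynomial.expand_eval, Polynomial.eval_map]

theorem split_step {A : Type*} [CommRing A] [Nontrivial A] (r m : ℕ) (hr : 1 ≤ r)
    (f : Polynomial A)
    (hf : f.Monic) (hd : f.natDegree = m + 1) (h : Polynomial A)
    (hh : h = Polynomial.expand A r f) :
    ∃ g : Polynomial (AdjoinRoot h), g.Monic ∧ g.natDegree = m ∧
      ∃ e : (MvPolynomial (Fin (m + 1)) A ⧸ splitIdeal r (m + 1) f) ≃ₐ[A]
        (MvPolynomial (Fin m) (AdjoinRoot h) ⧸ splitIdeal r m g),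
        e (Ideal.Quotient.mk _ (MvPolynomial.X (Fin.last m))) =
          algebraMap (AdjoinRoot h) _ (AdjoinRoot.root h) := by
  have hmon : h.Monic := hh ▸ hf.expand (by omega)
  have hdeg : h.natDegree = (m + 1) * r := by rw [hh, Polynomial.natDegree_expand, hd]
  have hnt : Nontrivial (AdjoinRoot h) := by
    refine Ideal.Quotient.nontrivial_iff.2 ?_
    rw [Ne, Ideal.span_singleton_eq_top]
    intro hu
    have := hmon.isUnit_iff.1 hu
    rw [this] at hdeg
    have h1 : 0 < (m + 1) * r := by positivity
    simp only [Polynomial.natDegree_one] at hdeg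
    omega
  set x := AdjoinRoot.root h with hx
  have hroot : (f.map (AdjoinRoot.of h)).IsRoot (x ^ r) := by
    have := AdjoinRoot.eval₂_root h
    conv at this => enter [1, 3]; rw [hh]
    rw [expand_eval₂'] at this
    rw [Polynomial.IsRoot, Polynomial.eval_map]
    exact this
  obtain ⟨g, hg⟩ := Polynomial.dvd_iff_isRoot.2 hroot
  have hfm : (f.map (AdjoinRoot.of h)).Monic := hf.map _
  have hgm : g.Monic := (Polynomial.monic_X_sub_C (x ^ r)).of_mul_monic_left (hg ▸ hfm)
  refine ⟨g, hgm, ?_, ?_⟩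
  · have h1 := congrArg Polynomial.natDegree hg
    rw [(Polynomial.monic_X_sub_C _).natDegree_mul hgm, hf.natDegree_map, hd,
      Polynomial.natDegree_X_sub_C] at h1
    omega
  let D := MvPolynomial (Fin (m + 1)) A ⧸ splitIdeal r (m + 1) f
  let D' := MvPolynomial (Fin m) (AdjoinRoot h) ⧸ splitIdeal r m g
  let y : Fin (m + 1) → D := fun i => Ideal.Quotient.mk _ (MvPolynomial.X i)
  let z : Fin m → D' := fun i => Ideal.Quotient.mk _ (MvPolynomial.X i)
  have hy : f.map (algebraMap A D) = splitPoly r (m + 1) y := splitIdeal_mk r (m + 1) f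
  have hz : g.map (algebraMap (AdjoinRoot h) D') = splitPoly r m z := splitIdeal_mk r m g
  let w : Fin (m + 1) → D' := fun i => Fin.lastCases (algebraMap (AdjoinRoot h) D' x) z i
  have hw1 : w (Fin.last m) = algebraMap (AdjoinRoot h) D' x := by simp [w]
  have hw2 : ∀ i : Fin m, w i.castSucc = z i := by intro i; simp [w]
  -- forward
  let φ0 : MvPolynomial (Fin (m + 1)) A →ₐ[A] D' := MvPolynomial.aeval w
  have hφ0 : splitIdeal r (m + 1) f ≤ RingHom.ker (φ0 : MvPolynomial (Fin (m + 1)) A →+* D') := by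
    rw [splitIdeal_le_ker]
    have e1 : (φ0 : MvPolynomial (Fin (m + 1)) A →+* D').comp MvPolynomial.C
        = (algebraMap (AdjoinRoot h) D').comp (AdjoinRoot.of h) := by
      ext a
      simp only [RingHom.comp_apply, RingHom.coe_coe, φ0, MvPolynomial.aeval_C]
      rfl
    rw [e1, ← Polynomial.map_map, hg, Polynomial.map_mul, hz, splitPoly_succ]
    simp only [RingHom.coe_coe, φ0, MvPolynomial.aeval_X, hw1, hw2]
    simp [mul_comm]
  let φ : D →ₐ[A] D' := Ideal.Quotient.liftₐ _ φ0 (fun a ha => hφ0 ha)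
  have hφ : ∀ i, φ (y i) = w i := by
    intro i
    show φ0 (MvPolynomial.X i) = w i
    simp [φ0]
  -- backward
  have hev : Polynomial.eval₂ (algebraMap A D) (y (Fin.last m)) h = 0 := by
    rw [hh, expand_eval₂', ← Polynomial.eval_map, hy, splitPoly_succ]
    simp
  obtain ⟨ψ1, hψ1, hψ1c⟩ : ∃ ψ1 : AdjoinRoot h →+* D, ψ1 x = y (Fin.last m) ∧
      ψ1.comp (AdjoinRoot.of h) = algebraMap A D :=
    ⟨AdjoinRoot.lift (algebraMap A D) (y (Fin.last m)) hev, AdjoinRoot.lift_root hev,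
      RingHom.ext fun a => AdjoinRoot.lift_of hev⟩
  have e3 : g.map ψ1 = splitPoly r m (fun i => y i.castSucc) := by
    have e2 := congrArg (Polynomial.map ψ1) hg
    rw [Polynomial.map_map, hψ1c, hy, splitPoly_succ, Polynomial.map_mul, mul_comm,
      Polynomial.map_sub, Polynomial.map_X, Polynomial.map_C, map_pow ψ1, hψ1] at e2
    exact ((Polynomial.monic_X_sub_C (y (Fin.last m) ^ r)).isRegular.left e2).symm
  obtain ⟨ψ, hψz, hψa⟩ : ∃ ψ : D' →+* D, (∀ i, ψ (z i) = y i.castSucc) ∧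
      ∀ a, ψ (algebraMap (AdjoinRoot h) D' a) = ψ1 a := by
    let ψ0 : MvPolynomial (Fin m) (AdjoinRoot h) →+* D :=
      MvPolynomial.eval₂Hom ψ1 (fun i => y i.castSucc)
    have hX : ∀ i, ψ0 (MvPolynomial.X i) = y i.castSucc := fun i => MvPolynomial.eval₂Hom_X' _ _ _
    have hC : ∀ a, ψ0 (MvPolynomial.C a) = ψ1 a := fun a => MvPolynomial.eval₂Hom_C _ _ _
    have hψ0 : splitIdeal r m g ≤ RingHom.ker ψ0 := by
      rw [splitIdeal_le_ker]
      have e1 : ψ0.comp MvPolynomial.C = ψ1 := RingHom.ext hC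
      rw [e1, e3]
      simp only [hX]
    exact ⟨Ideal.Quotient.lift _ ψ0 (fun a ha => hψ0 ha), hX, hC⟩
  have hl : ∀ d, ψ (φ d) = d := by
    have : (ψ.comp (φ : D →+* D')) = RingHom.id D := by
      apply Ideal.Quotient.ringHom_ext
      apply MvPolynomial.ringHom_ext
      · intro a
        show ψ (φ (algebraMap A D a)) = algebraMap A D a
        rw [φ.commutes, IsScalarTower.algebraMap_apply A (AdjoinRoot h) D', hψa, ← hψ1c]
        rfl
      · intro i
        show ψ (φ (y i)) = y i
        rw [hφ]
        refine Fin.lastCases ?_ (fun i => ?_) i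
        · rw [hw1, hψa, hψ1]
        · rw [hw2, hψz]
    intro d
    exact congrArg (fun F : D →+* D => F d) this
  have hφψ1 : ∀ a, φ (ψ1 a) = algebraMap (AdjoinRoot h) D' a := by
    have : (φ : D →+* D').comp ψ1 = algebraMap (AdjoinRoot h) D' := by
      apply Ideal.Quotient.ringHom_ext
      apply Polynomial.ringHom_ext
      · intro a
        show φ (ψ1 (AdjoinRoot.of h a)) = _
        have e4 : ψ1 (AdjoinRoot.of h a) = algebraMap A D a := by rw [← hψ1c]; rfl
        rw [e4, φ.commutes, IsScalarTower.algebraMap_apply A (AdjoinRoot h) D']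
        rfl
      · show φ (ψ1 x) = algebraMap (AdjoinRoot h) D' x
        rw [hψ1, hφ, hw1]
    intro a
    exact congrArg (fun F : AdjoinRoot h →+* D' => F a) this
  have hrr : ∀ d, φ (ψ d) = d := by
    have : ((φ : D →+* D').comp ψ) = RingHom.id D' := by
      apply Ideal.Quotient.ringHom_ext
      apply MvPolynomial.ringHom_ext
      · intro a
        show φ (ψ (algebraMap (AdjoinRoot h) D' a)) = algebraMap (AdjoinRoot h) D' a
        rw [hψa, hφψ1]
      · intro i
        show φ (ψ (z i)) = z i
        rw [hψz, hφ, hw2]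
    intro d
    exact congrArg (fun F : D' →+* D' => F d) this
  refine ⟨AlgEquiv.ofBijective φ ⟨Function.LeftInverse.injective hl,
    Function.RightInverse.surjective hrr⟩, ?_⟩
  show φ (y (Fin.last m)) = _
  rw [hφ, hw1]

theorem split_free (r : ℕ) (hr : 1 ≤ r) (m : ℕ) : ∀ (A : Type u) [CommRing A] (f : Polynomial A)
    (_ : f.Monic) (_ : f.natDegree = m),
    Module.Free A (MvPolynomial (Fin m) A ⧸ splitIdeal r m f) := by
  induction m with
  | zero =>
    intro A _ f hf hd
    have h1 : f = 1 := hf.natDegree_eq_zero.1 hd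
    have h2 : splitIdeal r 0 f = ⊥ := by
      simp [splitIdeal, h1, splitPoly]
    rw [h2]
    exact Module.Free.of_equiv (AlgEquiv.quotientBot A (MvPolynomial (Fin 0) A)).symm.toLinearEquiv
  | succ m ih =>
    intro A _ f hf hd
    cases subsingleton_or_nontrivial A
    · infer_instance
    obtain ⟨g, hg, hgd, e, -⟩ := split_step r m hr f hf hd _ rfl
    have := ih _ g hg hgd
    have hmon : (Polynomial.expand A r f).Monic := hf.expand (by omega)
    have : Module.Free A (AdjoinRoot (Polynomial.expand A r f)) := hmon.free_adjoinRoot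
    have : Module.Free A (MvPolynomial (Fin m) (AdjoinRoot (Polynomial.expand A r f)) ⧸ splitIdeal r m g) :=
      Module.Free.trans (S := AdjoinRoot (Polynomial.expand A r f))
    exact Module.Free.of_equiv e.symm.toLinearEquiv

theorem esymmPow_eq (k : Type*) [CommRing k] (n r j : ℕ) (hj : j ≤ n) :
    (splitPoly r n (fun i => (MvPolynomial.X i : MvPolynomial (Fin n) k))).coeff j =
      (-1) ^ (n - j) * esymmPow k n r (n - j) := by
  have h := Multiset.prod_X_sub_C_coeff
    ((Finset.univ : Finset (Fin n)).val.map fun i => (MvPolynomial.X i : MvPolynomial (Fin n) k) ^ r)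
    (k := j) (by simpa using hj)
  rw [Finset.esymm_map_val] at h
  rw [Multiset.map_map, Multiset.card_map, Finset.card_val, Finset.card_univ, Fintype.card_fin] at h
  exact h

theorem coinvIdeal_eq (k : Type*) [CommRing k] (n r : ℕ) :
    coinvIdeal k n r = splitIdeal r n (Polynomial.X ^ n : Polynomial k) := by
  cases subsingleton_or_nontrivial k
  · exact Subsingleton.elim _ _
  have hlt : ∀ j < n, ((Polynomial.X ^ n : Polynomial k).map MvPolynomial.C -
      splitPoly r n (fun i => (MvPolynomial.X i : MvPolynomial (Fin n) k))).coeff j =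
        - ((-1) ^ (n - j) * esymmPow k n r (n - j)) := by
    intro j hj
    rw [Polynomial.coeff_sub, esymmPow_eq k n r j hj.le]
    simp [Polynomial.coeff_X_pow, hj.ne]
  apply le_antisymm
  · rw [coinvIdeal, Ideal.span_le, Set.range_subset_iff]
    intro i
    have hi : n - (n - (i + 1 : ℕ)) = i + 1 := by omega
    have h1 := hlt (n - (i + 1)) (by omega)
    rw [hi] at h1
    have h2 : esymmPow k n r (i + 1) = (- (-1) ^ (i + 1 : ℕ)) *
        ((Polynomial.X ^ n : Polynomial k).map MvPolynomial.C -
      splitPoly r n (fun i => (MvPolynomial.X i : MvPolynomial (Fin n) k))).coeff (n - (i + 1)) := by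
      rw [h1]
      have : ((-1 : MvPolynomial (Fin n) k) ^ (i + 1 : ℕ)) * (-1) ^ (i + 1 : ℕ) = 1 := by
        rw [← mul_pow]; simp
      linear_combination (- esymmPow k n r (i + 1)) * this
    show esymmPow k n r (i + 1) ∈ _
    rw [h2]
    exact Ideal.mul_mem_left _ _ (Ideal.subset_span ⟨_, rfl⟩)
  · rw [splitIdeal, Ideal.span_le, Set.range_subset_iff]
    intro j
    rw [SetLike.mem_coe]
    rcases lt_trichotomy j n with hj | hj | hj
    · rw [hlt j hj]
      refine neg_mem (Ideal.mul_mem_left _ _ (Ideal.subset_span ⟨⟨n - j - 1, by omega⟩, ?_⟩))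
      show esymmPow k n r (n - j - 1 + 1) = _
      congr 1
      omega
    · subst hj
      rw [Polynomial.coeff_sub, esymmPow_eq k j r j le_rfl]
      simp [esymmPow]
    · have hd : (splitPoly r n (fun i => (MvPolynomial.X i : MvPolynomial (Fin n) k))).natDegree = n := by
        rw [splitPoly, Polynomial.natDegree_prod_of_monic _ _ (fun i _ => Polynomial.monic_X_sub_C _)]
        simp only [Polynomial.natDegree_X_sub_C]
        simp
      rw [Polynomial.coeff_sub, Polynomial.coeff_eq_zero_of_natDegree_lt (p := splitPoly _ _ _) (hd.trans_lt hj)]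
      simp [Polynomial.coeff_X_pow, hj.ne']

theorem free_compHom {A D D' : Type*} [CommRing A] [CommRing D] [CommRing D'] [Algebra A D']
    [Module.Free A D'] (e : D' ≃+* D) (ι : A →+* D) (hι : ∀ a, ι a = e (algebraMap A D' a)) :
    @Module.Free A D _ _ (Module.compHom D ι) := by
  let hmod : Module A D := Module.compHom D ι
  have hsm : ∀ (a : A) (d : D), a • d = ι a * d := fun _ _ => rfl
  let l : D' ≃ₗ[A] D :=
    { e with
      map_smul' := by
        intro a d
        show e (a • d) = a • e d
        rw [Algebra.smul_def, map_mul, hsm, hι] }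
  exact Module.Free.of_equiv l

theorem exists_section {k Q : Type*} [Field k] [CommRing Q] (r m : ℕ) (hr : 1 ≤ r)
    (q : MvPolynomial (Fin (m + 1)) k →+* Q)
    (hI : splitIdeal r (m + 1) (Polynomial.X ^ (m + 1) : Polynomial k) ≤ RingHom.ker q)
    (hx : q (MvPolynomial.X (Fin.last m)) = 0) :
    ∃ σ : MvPolynomial (Fin m) k →+* Q,
      splitIdeal r m (Polynomial.X ^ m : Polynomial k) ≤ RingHom.ker σ ∧
      (∀ a, σ (MvPolynomial.C a) = q (MvPolynomial.C a)) ∧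
      ∀ i, σ (MvPolynomial.X i) = q (MvPolynomial.X i.castSucc) := by
  let σ : MvPolynomial (Fin m) k →+* Q := MvPolynomial.eval₂Hom (q.comp MvPolynomial.C)
    (fun i => q (MvPolynomial.X i.castSucc))
  have hX : ∀ i, σ (MvPolynomial.X i) = q (MvPolynomial.X i.castSucc) :=
    fun i => MvPolynomial.eval₂Hom_X' _ _ _
  refine ⟨σ, ?_, fun a => MvPolynomial.eval₂Hom_C _ _ _, hX⟩
  rw [splitIdeal_le_ker] at hI ⊢
  rw [splitPoly_succ, hx, zero_pow (by omega), map_zero, sub_zero, Polynomial.map_pow,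
    Polynomial.map_X, pow_succ] at hI
  have h2 := Polynomial.monic_X.isRegular.right hI
  rw [Polynomial.map_pow, Polynomial.map_X]
  simp only [hX]
  exact h2

/-- **Example (Example 3.3 / ex:SLCoin, the free-extension structure).** For `n = m+1 ≥ 2`,
the coinvariant algebra `C = k[x_1,…,x_n]/(e_1(r,n),…,e_n(r,n))` of `G(r,1,n)` is a free
extension of `A = k[t]/(t^{rn})` with fiber the `G(r,1,n-1)`-coinvariant algebra
`B = k[x_1,…,x_{n-1}]/(e_1(r,n-1),…,e_{n-1}(r,n-1))`, via `ι : t ↦ x_n` (injective, making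
`C` a free `A`-module) and `π : x_i ↦ x_i (i < n), x_n ↦ 0` (surjective, with
`ker π = ι(m_A)·C` the ideal generated by the class of `x_n`). -/
theorem coinvariant_algebra_Grn_free_extension
    (k : Type*) [Field k] [CharZero k] (r m : ℕ) (hr : 1 ≤ r) (hm : 1 ≤ m) :
    (∃ ι : (Polynomial k ⧸ Ideal.span {(Polynomial.X : Polynomial k) ^ (r * (m + 1))}) →+*
        (MvPolynomial (Fin (m + 1)) k ⧸ coinvIdeal k (m + 1) r),
      (∀ p : Polynomial k,
        ι (Ideal.Quotient.mk (Ideal.span {(Polynomial.X : Polynomial k) ^ (r * (m + 1))}) p) =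
          Ideal.Quotient.mk (coinvIdeal k (m + 1) r)
            (Polynomial.aeval (MvPolynomial.X (Fin.last m) : MvPolynomial (Fin (m + 1)) k) p)) ∧
      Function.Injective ι ∧
      @Module.Free (Polynomial k ⧸ Ideal.span {(Polynomial.X : Polynomial k) ^ (r * (m + 1))})
        (MvPolynomial (Fin (m + 1)) k ⧸ coinvIdeal k (m + 1) r) _ _
        (Module.compHom (MvPolynomial (Fin (m + 1)) k ⧸ coinvIdeal k (m + 1) r) ι)) ∧
    (∃ π : (MvPolynomial (Fin (m + 1)) k ⧸ coinvIdeal k (m + 1) r) →+*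
        (MvPolynomial (Fin m) k ⧸ coinvIdeal k m r),
      (∀ f : MvPolynomial (Fin (m + 1)) k,
        π (Ideal.Quotient.mk (coinvIdeal k (m + 1) r) f) =
          Ideal.Quotient.mk (coinvIdeal k m r)
            (MvPolynomial.aeval (fun i => Fin.lastCases 0 MvPolynomial.X i) f)) ∧
      Function.Surjective π ∧
      RingHom.ker π =
        Ideal.span {Ideal.Quotient.mk (coinvIdeal k (m + 1) r)
          (MvPolynomial.X (Fin.last m) : MvPolynomial (Fin (m + 1)) k)}) := by
  rw [coinvIdeal_eq, coinvIdeal_eq]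
  constructor
  · have hh : (Polynomial.X : Polynomial k) ^ (r * (m + 1)) =
        Polynomial.expand k r (Polynomial.X ^ (m + 1)) := by
      rw [map_pow, Polynomial.expand_X, pow_mul]
    obtain ⟨g, hg, hgd, e, he⟩ := split_step r m hr (Polynomial.X ^ (m + 1) : Polynomial k)
      (Polynomial.monic_X_pow _) (Polynomial.natDegree_X_pow _) _ hh
    have hfree := split_free r hr m _ g hg hgd
    let A' := AdjoinRoot ((Polynomial.X : Polynomial k) ^ (r * (m + 1)))
    let D := MvPolynomial (Fin (m + 1)) k ⧸ splitIdeal r (m + 1) (Polynomial.X ^ (m + 1) : Polynomial k)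
    let D' := MvPolynomial (Fin m) A' ⧸ splitIdeal r m g
    let ι : A' →+* D := (e.symm : D' →+* D).comp (algebraMap A' D')
    have hnt : Nontrivial D := by
      refine Ideal.Quotient.nontrivial_iff.2 ?_
      intro htop
      have : splitIdeal r (m + 1) (Polynomial.X ^ (m + 1) : Polynomial k) ≤ RingHom.ker
          (MvPolynomial.eval (fun _ => 0) : MvPolynomial (Fin (m + 1)) k →+* k) := by
        rw [splitIdeal_le_ker]
        simp [splitPoly, show r ≠ 0 by omega]
      rw [htop, top_le_iff] at this
      exact RingHom.ker_ne_top _ this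
    refine ⟨ι, ?_, ?_, free_compHom (e.symm : D' ≃+* D) ι (fun _ => rfl)⟩
    · intro p
      have : ((e : D →+* D').comp (ι.comp (AdjoinRoot.mk _))) = (e : D →+* D').comp
          ((Ideal.Quotient.mk _).comp (Polynomial.aeval
          (MvPolynomial.X (Fin.last m) : MvPolynomial (Fin (m + 1)) k) :
          Polynomial k →ₐ[k] MvPolynomial (Fin (m + 1)) k).toRingHom) := by
        apply Polynomial.ringHom_ext
        · intro a
          show e (e.symm (algebraMap k D' a)) = e (Ideal.Quotient.mk _
            (Polynomial.aeval _ (Polynomial.C a)))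
          rw [e.apply_symm_apply, Polynomial.aeval_C]
          exact (e.commutes a).symm
        · show e (e.symm (algebraMap A' D' (AdjoinRoot.root _))) = e (Ideal.Quotient.mk _
            (Polynomial.aeval _ Polynomial.X))
          rw [e.apply_symm_apply, Polynomial.aeval_X]
          exact he.symm
      exact e.injective (congrArg (fun F : Polynomial k →+* D' => F p) this)
    · have hnt' : Nontrivial D' := e.symm.toEquiv.nontrivial
      have hinj : Function.Injective (algebraMap A' D') := FaithfulSMul.algebraMap_injective A' D'
      exact (e.symm.injective.comp hinj :)
  · let I := splitIdeal r (m + 1) (Polynomial.X ^ (m + 1) : Polynomial k)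
    let J := splitIdeal r m (Polynomial.X ^ m : Polynomial k)
    let C := MvPolynomial (Fin (m + 1)) k ⧸ I
    let B := MvPolynomial (Fin m) k ⧸ J
    let φ : MvPolynomial (Fin (m + 1)) k →+* MvPolynomial (Fin m) k :=
      (MvPolynomial.aeval (fun i => Fin.lastCases 0 MvPolynomial.X i) :
        MvPolynomial (Fin (m + 1)) k →ₐ[k] MvPolynomial (Fin m) k)
    have hφ1 : φ (MvPolynomial.X (Fin.last m)) = 0 := by simp [φ]
    have hφ2 : ∀ i : Fin m, φ (MvPolynomial.X i.castSucc) = MvPolynomial.X i := by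
      intro i; simp [φ]
    have hφ3 : ∀ a, φ (MvPolynomial.C a) = MvPolynomial.C a := by
      intro a; simp [φ]
    have hker : I ≤ RingHom.ker ((Ideal.Quotient.mk J).comp φ) := by
      rw [splitIdeal_le_ker, splitPoly_succ]
      have := splitIdeal_mk r m (Polynomial.X ^ m : Polynomial k)
      simp only [RingHom.comp_apply, hφ1, hφ2]
      erw [← this]
      simp [show r ≠ 0 by omega, pow_succ]
    let π : C →+* B := Ideal.Quotient.lift I ((Ideal.Quotient.mk J).comp φ) (fun a ha => hker ha)
    have hπ : ∀ f, π (Ideal.Quotient.mk I f) = Ideal.Quotient.mk J (φ f) := fun f => rfl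
    refine ⟨π, fun f => rfl, ?_, ?_⟩
    · intro b
      obtain ⟨b, rfl⟩ := Ideal.Quotient.mk_surjective b
      refine ⟨Ideal.Quotient.mk I (MvPolynomial.rename Fin.castSucc b), ?_⟩
      rw [hπ]
      congr 1
      show MvPolynomial.aeval _ _ = _
      rw [MvPolynomial.aeval_rename]
      simp [Function.comp_def]
    · let x : C := Ideal.Quotient.mk I (MvPolynomial.X (Fin.last m))
      show RingHom.ker π = Ideal.span {x}
      apply le_antisymm
      · let Q := C ⧸ Ideal.span {x}
        let q : C →+* Q := Ideal.Quotient.mk _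
        have hqx : q x = 0 := Ideal.Quotient.eq_zero_iff_mem.2 (Ideal.mem_span_singleton_self x)
        obtain ⟨σ, hσ, hσC, hσX⟩ := exists_section (k := k) (Q := Q) r m hr
          (q.comp (Ideal.Quotient.mk I)) (fun a ha => by
            rw [RingHom.mem_ker, RingHom.comp_apply, Ideal.Quotient.eq_zero_iff_mem.2 ha,
              map_zero]) hqx
        have hσφ : σ.comp φ = q.comp (Ideal.Quotient.mk I) := by
          apply MvPolynomial.ringHom_ext
          · intro a
            rw [RingHom.comp_apply, hφ3, hσC]
          · intro i
            rw [RingHom.comp_apply]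
            refine Fin.lastCases ?_ (fun i => ?_) i
            · rw [hφ1, map_zero]; exact hqx.symm
            · rw [hφ2, hσX]
        intro c hc
        obtain ⟨f, rfl⟩ := Ideal.Quotient.mk_surjective c
        rw [RingHom.mem_ker, hπ, Ideal.Quotient.eq_zero_iff_mem] at hc
        have h0 : σ.comp φ f = 0 := hσ hc
        rw [hσφ] at h0
        exact Ideal.Quotient.eq_zero_iff_mem.1 h0
      · rw [Ideal.span_singleton_le_iff_mem, RingHom.mem_ker, hπ, hφ1, map_zero]
end

section
/- Let k be a field of characteristic 0 and let A = k[x,y]/(x^3 − y^6, xy), a 9-dimensional k-algebra. Then multiplication by ℓ = x + y on A has Jordan type (7,2): for every integer k ≥ 0, dim_k ker((×ℓ)^k : A → A) = min(k,7) + min(k,2). Moreover, with the grading deg x = 2, deg y = 1, A is a graded Artinian Gorenstein algebra with Hilbert function (1,1,2,1,2,1,1), whose conjugate partition is (7,2); hence ℓ = x + y has strong Lefschetz Jordan type even though the Hilbert function of A is not unimodal (so A admits no homogeneous strong Lefschetz element). -/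
set_option synthInstance.maxHeartbeats 400000
set_option maxHeartbeats 1000000

/-- The defining ideal `(x³ - y⁶, xy)` of the relative coinvariant algebra
`R^K_W ≅ k[x,y]/(x³ - y⁶, xy)` for `K = G(3,3,2) ⊂ W = G(3,3,3)`. -/
noncomputable def perazzoRelIdeal (k : Type*) [Field k] : Ideal (MvPolynomial (Fin 2) k) :=
  Ideal.span {MvPolynomial.X 0 ^ 3 - MvPolynomial.X 1 ^ 6,
    MvPolynomial.X 0 * MvPolynomial.X 1}

/-- The grading of `k[x,y]/(x³ - y⁶, xy)` with `deg x = 2`, `deg y = 1`: the degree-`i`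
component is the image of the weighted-homogeneous polynomials of weighted degree `i`. -/
noncomputable def relGrade (k : Type*) [Field k] (i : ℕ) :
    Submodule k (MvPolynomial (Fin 2) k ⧸ perazzoRelIdeal k) :=
  (MvPolynomial.weightedHomogeneousSubmodule k (![2, 1] : Fin 2 → ℕ) i).map
    (Ideal.Quotient.mkₐ k (perazzoRelIdeal k)).toLinearMap

open MvPolynomial in
/-- coordinate functional -/
noncomputable def pzPhi (k : Type*) [Field k] : MvPolynomial (Fin 2) k →ₗ[k] (Fin 9 → k) where
  toFun p := ![coeff 0 p, coeff (Finsupp.single 0 1) p, coeff (Finsupp.single 0 2) p,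
    coeff (Finsupp.single 0 3) p + coeff (Finsupp.single 1 6) p,
    coeff (Finsupp.single 1 1) p, coeff (Finsupp.single 1 2) p, coeff (Finsupp.single 1 3) p,
    coeff (Finsupp.single 1 4) p, coeff (Finsupp.single 1 5) p]
  map_add' p q := by
    ext i; fin_cases i <;> simp
    ring
  map_smul' c p := by
    ext i; fin_cases i <;> simp
    ring

open MvPolynomial in
theorem pzPhi_ideal (k : Type*) [Field k] (p : MvPolynomial (Fin 2) k)
    (hp : p ∈ perazzoRelIdeal k) : pzPhi k p = 0 := by
  obtain ⟨a, b, rfl⟩ := Ideal.mem_span_pair.1 hp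
  rw [map_add]
  have h1 : pzPhi k (a * (X 0 ^ 3 - X 1 ^ 6)) = 0 := by
    rw [mul_sub, X_pow_eq_monomial, X_pow_eq_monomial]
    ext i
    fin_cases i <;> simp [pzPhi, coeff_mul_monomial', Finsupp.single_le_iff]
  have h2 : pzPhi k (b * (X 0 * X 1)) = 0 := by
    rw [← mul_assoc]
    ext i
    fin_cases i <;> simp [pzPhi, coeff_mul_X']
  rw [h1, h2, add_zero]

abbrev PzA (k : Type*) [Field k] := MvPolynomial (Fin 2) k ⧸ perazzoRelIdeal k

noncomputable abbrev pzx (k : Type*) [Field k] : PzA k :=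
  Ideal.Quotient.mk (perazzoRelIdeal k) (MvPolynomial.X 0)
noncomputable abbrev pzy (k : Type*) [Field k] : PzA k :=
  Ideal.Quotient.mk (perazzoRelIdeal k) (MvPolynomial.X 1)

theorem pz_xy (k : Type*) [Field k] : pzx k * pzy k = 0 := by
  rw [← map_mul, Ideal.Quotient.eq_zero_iff_mem]
  exact Ideal.subset_span (by simp)

theorem pz_x3 (k : Type*) [Field k] : pzx k ^ 3 = pzy k ^ 6 := by
  rw [← sub_eq_zero, ← map_pow, ← map_pow, ← map_sub, Ideal.Quotient.eq_zero_iff_mem]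
  exact Ideal.subset_span (by simp)

open MvPolynomial in
/-- polynomial with given coordinates -/
noncomputable def pzP (k : Type*) [Field k] (v : Fin 9 → k) : MvPolynomial (Fin 2) k :=
  C (v 0) + C (v 1) * X 0 ^ 1 + C (v 2) * X 0 ^ 2 + C (v 3) * X 0 ^ 3 +
    C (v 4) * X 1 ^ 1 + C (v 5) * X 1 ^ 2 + C (v 6) * X 1 ^ 3 + C (v 7) * X 1 ^ 4 +
    C (v 8) * X 1 ^ 5

open MvPolynomial in
theorem pzPhi_P (k : Type*) [Field k] (v : Fin 9 → k) : pzPhi k (pzP k v) = v := by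
  have hz : ∀ (i : Fin 2) (n : ℕ), (0 = Finsupp.single i n) ↔ n = 0 := by
    intro i n; rw [eq_comm, Finsupp.single_eq_zero]
  ext i
  fin_cases i <;>
    simp [pzPhi, pzP, X_pow_eq_monomial, coeff_C_mul, coeff_monomial, coeff_C,
      hz, Finsupp.single_eq_single_iff, -pow_one]

open MvPolynomial in
noncomputable def pzPsi (k : Type*) [Field k] : (Fin 9 → k) →ₗ[k] PzA k where
  toFun v := Ideal.Quotient.mk (perazzoRelIdeal k) (pzP k v)
  map_add' v w := by
    rw [← map_add]; refine congrArg _ ?_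
    simp only [pzP, Pi.add_apply, map_add]; ring
  map_smul' c v := by
    rw [RingHom.id_apply, ← Ideal.Quotient.mkₐ_eq_mk k, ← map_smul]
    refine congrArg (Ideal.Quotient.mkₐ k (perazzoRelIdeal k)) ?_
    simp only [pzP, Pi.smul_apply, smul_eq_mul, map_mul, MvPolynomial.smul_eq_C_mul]; ring

theorem pzPsi_mul_x (k : Type*) [Field k] (v : Fin 9 → k) :
    pzPsi k v * pzx k = pzPsi k ![0, v 0, v 1, v 2, 0, 0, 0, 0, 0] := by
  have h1 := pz_xy k
  have h2 := pz_x3 k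
  simp [pzPsi, pzP]
  simp only [pzx, pzy] at h1 h2 ⊢
  generalize (Ideal.Quotient.mk (perazzoRelIdeal k) (MvPolynomial.X 0)) = x at *
  generalize (Ideal.Quotient.mk (perazzoRelIdeal k) (MvPolynomial.X 1)) = y at *
  generalize hc : (fun i => Ideal.Quotient.mk (perazzoRelIdeal k) (MvPolynomial.C (v i))) = c
  have hc' : ∀ i, Ideal.Quotient.mk (perazzoRelIdeal k) (MvPolynomial.C (v i)) = c i :=
    fun i => congrFun hc i
  simp only [hc']
  linear_combination (c 4 + c 5 * y + c 6 * y ^ 2 + c 7 * y ^ 3 + c 8 * y ^ 4) * h1 +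
    c 3 * x * h2 + c 3 * y ^ 5 * h1

theorem pzPsi_mul_y (k : Type*) [Field k] (v : Fin 9 → k) :
    pzPsi k v * pzy k = pzPsi k ![0, 0, 0, v 8, v 0, v 4, v 5, v 6, v 7] := by
  have h1 := pz_xy k
  have h2 := pz_x3 k
  simp [pzPsi, pzP]
  simp only [pzx, pzy] at h1 h2 ⊢
  generalize (Ideal.Quotient.mk (perazzoRelIdeal k) (MvPolynomial.X 0)) = x at *
  generalize (Ideal.Quotient.mk (perazzoRelIdeal k) (MvPolynomial.X 1)) = y at *
  generalize hc : (fun i => Ideal.Quotient.mk (perazzoRelIdeal k) (MvPolynomial.C (v i))) = c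
  have hc' : ∀ i, Ideal.Quotient.mk (perazzoRelIdeal k) (MvPolynomial.C (v i)) = c i :=
    fun i => congrFun hc i
  simp only [hc']
  linear_combination (c 1 + c 2 * x + c 3 * x ^ 2) * h1 - c 8 * h2

theorem pzPsi_inj (k : Type*) [Field k] : Function.Injective (pzPsi k) := by
  rw [injective_iff_map_eq_zero]
  intro v hv
  have := pzPhi_ideal k _ (Ideal.Quotient.eq_zero_iff_mem.1 hv)
  rwa [pzPhi_P] at this

theorem pzPsi_surj (k : Type*) [Field k] : Function.Surjective (pzPsi k) := by
  intro a
  obtain ⟨p, rfl⟩ := Ideal.Quotient.mk_surjective a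
  induction p using MvPolynomial.induction_on with
  | C c => exact ⟨![c, 0, 0, 0, 0, 0, 0, 0, 0], by simp [pzPsi, pzP]⟩
  | add p q hp hq =>
    obtain ⟨v, hv⟩ := hp
    obtain ⟨w, hw⟩ := hq
    exact ⟨v + w, by rw [map_add, hv, hw, map_add]⟩
  | mul_X p i hp =>
    obtain ⟨v, hv⟩ := hp
    rw [map_mul, ← hv]
    fin_cases i
    · exact ⟨_, (pzPsi_mul_x k v).symm⟩
    · exact ⟨_, (pzPsi_mul_y k v).symm⟩

noncomputable def pzE (k : Type*) [Field k] : (Fin 9 → k) ≃ₗ[k] PzA k :=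
  LinearEquiv.ofBijective (pzPsi k) ⟨pzPsi_inj k, pzPsi_surj k⟩

theorem pzPsi_eq_mk (k : Type*) [Field k] (v : Fin 9 → k) (p : MvPolynomial (Fin 2) k)
    (h : Ideal.Quotient.mk (perazzoRelIdeal k) p = pzPsi k v) : pzPhi k p = v := by
  have h' := pzPhi_ideal k _ (Ideal.Quotient.eq.1 h)
  rwa [map_sub, pzPhi_P, sub_eq_zero] at h'

theorem pz_finrank (k : Type*) [Field k] (d : ℕ) (S : Submodule k (PzA k))
    (f : (Fin d → k) → (Fin 9 → k)) (g : (Fin 9 → k) →ₗ[k] (Fin d → k))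
    (h1 : ∀ c, g (f c) = c) (h2 : ∀ c, pzPsi k (f c) ∈ S)
    (h3 : ∀ v, pzPsi k v ∈ S → f (g v) = v) : Module.finrank k S = d := by
  let F : S →ₗ[k] (Fin d → k) := g ∘ₗ (pzE k).symm.toLinearMap ∘ₗ S.subtype
  have key : ∀ v, (pzE k).symm (pzPsi k v) = v := fun v => (pzE k).symm_apply_apply v
  have hb : Function.Bijective F := by
    constructor
    · rintro ⟨a, ha⟩ ⟨b, hb⟩ hab
      obtain ⟨v, rfl⟩ := pzPsi_surj k a
      obtain ⟨w, rfl⟩ := pzPsi_surj k b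
      have : g v = g w := by simpa [F, key] using hab
      have : v = w := by rw [← h3 v ha, this, h3 w hb]
      subst this; rfl
    · intro c
      exact ⟨⟨_, h2 c⟩, by simp [F, key, h1]⟩
  rw [(LinearEquiv.ofBijective F hb).finrank_eq]
  simp

def pzDeg : Fin 9 → ℕ := ![0, 2, 4, 6, 1, 2, 3, 4, 5]

open MvPolynomial in
theorem pz_mem_grade (k : Type*) [Field k] (i : ℕ) (v : Fin 9 → k) :
    pzPsi k v ∈ relGrade k i ↔ ∀ j, pzDeg j ≠ i → v j = 0 := by
  constructor
  · rintro ⟨p, hp, hpv⟩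
    have h := pzPsi_eq_mk k v p hpv
    have hp' : IsWeightedHomogeneous (![2, 1] : Fin 2 → ℕ) p i := hp
    have hc := fun d => hp'.coeff_eq_zero d
    subst h
    intro j hj
    have e0 : ∀ n, Finsupp.weight (![2, 1] : Fin 2 → ℕ) (Finsupp.single 0 n) = n * 2 := by
      intro n; simp [Finsupp.weight_single]
    have e1 : ∀ n, Finsupp.weight (![2, 1] : Fin 2 → ℕ) (Finsupp.single 1 n) = n := by
      intro n; simp [Finsupp.weight_single]
    fin_cases j <;> simp [pzPhi, pzDeg] at hj ⊢
    · exact hc 0 (by simpa using hj)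
    · exact hc _ (by rw [e0]; simpa using hj)
    · exact hc _ (by rw [e0]; simpa using hj)
    · rw [hc _ (by rw [e0]; simpa using hj), hc _ (by rw [e1]; simpa using hj), add_zero]
    all_goals exact hc _ (by rw [e1]; simpa using hj)
  · intro h
    refine ⟨pzP k v, ?_, rfl⟩
    have hx : ∀ n, IsWeightedHomogeneous (![2, 1] : Fin 2 → ℕ) (X 0 ^ n : MvPolynomial (Fin 2) k) (2 * n) := by
      intro n
      have := (isWeightedHomogeneous_X k (![2, 1] : Fin 2 → ℕ) 0).pow n
      simpa [mul_comm] using this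
    have hy : ∀ n, IsWeightedHomogeneous (![2, 1] : Fin 2 → ℕ) (X 1 ^ n : MvPolynomial (Fin 2) k) n := by
      intro n
      have := (isWeightedHomogeneous_X k (![2, 1] : Fin 2 → ℕ) 1).pow n
      simpa [mul_comm] using this
    have key : ∀ (j : Fin 9) (q : MvPolynomial (Fin 2) k),
        IsWeightedHomogeneous (![2, 1] : Fin 2 → ℕ) q (pzDeg j) →
        C (v j) * q ∈ weightedHomogeneousSubmodule k (![2, 1] : Fin 2 → ℕ) i := by
      intro j q hq
      by_cases hj : pzDeg j = i
      · rw [← smul_eq_C_mul]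
        apply Submodule.smul_mem
        rw [← hj]; exact hq
      · rw [h j hj]; simp
    have k0 := key 0 1 (isWeightedHomogeneous_one _ _)
    rw [mul_one] at k0
    exact add_mem (add_mem (add_mem (add_mem (add_mem (add_mem (add_mem (add_mem
      k0 (key 1 _ (hx 1))) (key 2 _ (hx 2))) (key 3 _ (hx 3))) (key 4 _ (hy 1)))
      (key 5 _ (hy 2))) (key 6 _ (hy 3))) (key 7 _ (hy 4))) (key 8 _ (hy 5))

def pzN {k : Type*} [Field k] (v : Fin 9 → k) : Fin 9 → k :=
  ![0, v 0, v 1, v 2 + v 8, v 0, v 4, v 5, v 6, v 7]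

theorem pz_pow (k : Type*) [Field k] (n : ℕ) (v : Fin 9 → k) :
    ((LinearMap.mulLeft k (Ideal.Quotient.mk (perazzoRelIdeal k)
          (MvPolynomial.X 0 + MvPolynomial.X 1))) ^ n) (pzPsi k v) = pzPsi k (pzN^[n] v) := by
  induction n generalizing v with
  | zero => simp
  | succ n ih =>
    have hs : pzPsi k v * Ideal.Quotient.mk (perazzoRelIdeal k)
        (MvPolynomial.X 0 + MvPolynomial.X 1) = pzPsi k (pzN v) := by
      rw [map_add, mul_add, pzPsi_mul_x, pzPsi_mul_y, ← map_add]
      refine congrArg (pzPsi k) ?_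
      ext i; fin_cases i <;> simp [pzN]
    rw [pow_succ, Function.iterate_succ_apply, ← ih, Module.End.mul_apply,
      LinearMap.mulLeft_apply, mul_comm, hs]

theorem pz_ker (k : Type*) [Field k] (n : ℕ) (v : Fin 9 → k) :
    pzPsi k v ∈ LinearMap.ker ((LinearMap.mulLeft k (Ideal.Quotient.mk (perazzoRelIdeal k)
          (MvPolynomial.X 0 + MvPolynomial.X 1))) ^ n) ↔ pzN^[n] v = 0 := by
  rw [LinearMap.mem_ker, pz_pow, ← map_zero (pzPsi k), (pzPsi_inj k).eq_iff]

theorem pz_zero_iff {k : Type*} [Field k] (v : Fin 9 → k) : v = 0 ↔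
    v 0 = 0 ∧ v 1 = 0 ∧ v 2 = 0 ∧ v 3 = 0 ∧ v 4 = 0 ∧ v 5 = 0 ∧ v 6 = 0 ∧ v 7 = 0 ∧ v 8 = 0 := by
  rw [funext_iff]; simp [Fin.forall_fin_succ]

theorem pz_n0 (k : Type*) [Field k] (S : Submodule k (PzA k))
    (h : ∀ v, pzPsi k v ∈ S → v = 0) : Module.finrank k S = 0 := by
  refine pz_finrank k 0 S (fun _ => 0) 0 (fun c => Subsingleton.elim _ _) (fun c => by simp) ?_
  intro v hv; exact (h v hv).symm

theorem pz_n9 (k : Type*) [Field k] (S : Submodule k (PzA k))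
    (h : ∀ v, pzPsi k v ∈ S) : Module.finrank k S = 9 :=
  pz_finrank k 9 S id LinearMap.id (fun _ => rfl) h (fun _ _ => rfl)

/-- select coordinates -/
def pzSel (k : Type*) [Field k] {d : ℕ} (s : Fin d → Fin 9) : (Fin 9 → k) →ₗ[k] (Fin d → k) :=
  LinearMap.funLeft k k s

theorem pzSel_apply (k : Type*) [Field k] {d : ℕ} (s : Fin d → Fin 9) (v : Fin 9 → k) (i : Fin d) :
    pzSel k s v i = v (s i) := rfl

theorem pz_iter1 {k : Type*} [Field k] (v : Fin 9 → k) : pzN^[1] v = ![0, v 0, v 1, v 2 + v 8, v 0, v 4, v 5, v 6, v 7] := rfl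

theorem pz_iter2 {k : Type*} [Field k] (v : Fin 9 → k) : pzN^[2] v = ![0, 0, v 0, v 1 + v 7, 0, v 0, v 4, v 5, v 6] := by
  rw [Function.iterate_succ_apply', pz_iter1]
  ext i; fin_cases i <;> simp [pzN]

theorem pz_iter3 {k : Type*} [Field k] (v : Fin 9 → k) : pzN^[3] v = ![0, 0, 0, v 0 + v 6, 0, 0, v 0, v 4, v 5] := by
  rw [Function.iterate_succ_apply', pz_iter2]
  ext i; fin_cases i <;> simp [pzN]

theorem pz_iter4 {k : Type*} [Field k] (v : Fin 9 → k) : pzN^[4] v = ![0, 0, 0, v 5, 0, 0, 0, v 0, v 4] := by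
  rw [Function.iterate_succ_apply', pz_iter3]
  ext i; fin_cases i <;> simp [pzN]

theorem pz_iter5 {k : Type*} [Field k] (v : Fin 9 → k) : pzN^[5] v = ![0, 0, 0, v 4, 0, 0, 0, 0, v 0] := by
  rw [Function.iterate_succ_apply', pz_iter4]
  ext i; fin_cases i <;> simp [pzN]

theorem pz_iter6 {k : Type*} [Field k] (v : Fin 9 → k) : pzN^[6] v = ![0, 0, 0, v 0, 0, 0, 0, 0, 0] := by
  rw [Function.iterate_succ_apply', pz_iter5]
  ext i; fin_cases i <;> simp [pzN]

theorem pz_iter7 {k : Type*} [Field k] (v : Fin 9 → k) : pzN^[7] v = 0 := by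
  rw [Function.iterate_succ_apply', pz_iter6]
  ext i; fin_cases i <;> simp [pzN]

theorem pz_jordan (k : Type*) [Field k] (n : ℕ) :
    Module.finrank k (LinearMap.ker
        ((LinearMap.mulLeft k (Ideal.Quotient.mk (perazzoRelIdeal k)
          (MvPolynomial.X 0 + MvPolynomial.X 1))) ^ n)) = min n 7 + min n 2 := by
  by_cases hn : 7 ≤ n
  · rw [min_eq_right hn, min_eq_right (by omega)]
    apply pz_n9
    intro v
    rw [pz_ker]
    obtain ⟨m, rfl⟩ := Nat.exists_eq_add_of_le hn
    rw [Function.iterate_add_apply]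
    exact pz_iter7 _
  · have : n = 0 ∨ n = 1 ∨ n = 2 ∨ n = 3 ∨ n = 4 ∨ n = 5 ∨ n = 6 := by omega
    rcases this with rfl | rfl | rfl | rfl | rfl | rfl | rfl
    · apply pz_n0
      intro v hv
      rw [pz_ker] at hv
      exact hv
    · refine pz_finrank k 2 _ (fun c => ![0, 0, c 0, c 1, 0, 0, 0, 0, -c 0])
        (pzSel k ![2, 3]) ?_ ?_ ?_
      · intro c; ext i; fin_cases i <;> simp [pzSel_apply]
      · intro c; rw [pz_ker, pz_iter1, pz_zero_iff]; simp
      · intro v hv; rw [pz_ker, pz_iter1, pz_zero_iff] at hv; simp at hv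
        ext i; fin_cases i <;> simp [pzSel_apply] <;> grind
    · refine pz_finrank k 4 _ (fun c => ![0, c 0, c 1, c 2, 0, 0, 0, -c 0, c 3])
        (pzSel k ![1, 2, 3, 8]) ?_ ?_ ?_
      · intro c; ext i; fin_cases i <;> simp [pzSel_apply]
      · intro c; rw [pz_ker, pz_iter2, pz_zero_iff]; simp
      · intro v hv; rw [pz_ker, pz_iter2, pz_zero_iff] at hv; simp at hv
        ext i; fin_cases i <;> simp [pzSel_apply] <;> grind
    · refine pz_finrank k 5 _ (fun c => ![0, c 0, c 1, c 2, 0, 0, 0, c 3, c 4])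
        (pzSel k ![1, 2, 3, 7, 8]) ?_ ?_ ?_
      · intro c; ext i; fin_cases i <;> simp [pzSel_apply]
      · intro c; rw [pz_ker, pz_iter3, pz_zero_iff]; simp
      · intro v hv; rw [pz_ker, pz_iter3, pz_zero_iff] at hv; simp at hv
        ext i; fin_cases i <;> simp [pzSel_apply] <;> grind
    · refine pz_finrank k 6 _ (fun c => ![0, c 0, c 1, c 2, 0, 0, c 5, c 3, c 4])
        (pzSel k ![1, 2, 3, 7, 8, 6]) ?_ ?_ ?_
      · intro c; ext i; fin_cases i <;> simp [pzSel_apply]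
      · intro c; rw [pz_ker, pz_iter4, pz_zero_iff]; simp
      · intro v hv; rw [pz_ker, pz_iter4, pz_zero_iff] at hv; simp at hv
        ext i; fin_cases i <;> simp [pzSel_apply] <;> grind
    · refine pz_finrank k 7 _ (fun c => ![0, c 0, c 1, c 2, 0, c 6, c 5, c 3, c 4])
        (pzSel k ![1, 2, 3, 7, 8, 6, 5]) ?_ ?_ ?_
      · intro c; ext i; fin_cases i <;> simp [pzSel_apply]
      · intro c; rw [pz_ker, pz_iter5, pz_zero_iff]; simp
      · intro v hv; rw [pz_ker, pz_iter5, pz_zero_iff] at hv; simp at hv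
        ext i; fin_cases i <;> simp [pzSel_apply] <;> grind
    · refine pz_finrank k 8 _ (fun c => ![0, c 0, c 1, c 2, c 7, c 6, c 5, c 3, c 4])
        (pzSel k ![1, 2, 3, 7, 8, 6, 5, 4]) ?_ ?_ ?_
      · intro c; ext i; fin_cases i <;> simp [pzSel_apply]
      · intro c; rw [pz_ker, pz_iter6, pz_zero_iff]; simp
      · intro v hv; rw [pz_ker, pz_iter6, pz_zero_iff] at hv; simp at hv
        ext i; fin_cases i <;> simp [pzSel_apply] <;> grind

theorem pz_grade1 (k : Type*) [Field k] (i : ℕ) (j : Fin 9)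
    (hj : ∀ j', pzDeg j' = i ↔ j' = j) : Module.finrank k (relGrade k i) = 1 := by
  refine pz_finrank k 1 _ (fun c => Pi.single j (c 0)) (pzSel k ![j]) ?_ ?_ ?_
  · intro c; ext i; fin_cases i; simp [pzSel_apply]
  · intro c; rw [pz_mem_grade]; intro j' hj'
    rw [Ne, hj] at hj'
    simp [hj']
  · intro v hv
    rw [pz_mem_grade] at hv
    ext j'
    by_cases h : j' = j
    · subst h; simp [pzSel_apply]
    · simp [h, hv j' (by rwa [Ne, hj])]

theorem pz_grade2 (k : Type*) [Field k] (i : ℕ) (j l : Fin 9) (hjl : j ≠ l)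
    (hj : ∀ j', pzDeg j' = i ↔ j' = j ∨ j' = l) : Module.finrank k (relGrade k i) = 2 := by
  refine pz_finrank k 2 _ (fun c => Pi.single j (c 0) + Pi.single l (c 1)) (pzSel k ![j, l]) ?_ ?_ ?_
  · intro c; ext i; fin_cases i <;> simp [pzSel_apply, hjl, hjl.symm]
  · intro c; rw [pz_mem_grade]; intro j' hj'
    rw [Ne, hj, not_or] at hj'
    simp [hj'.1, hj'.2]
  · intro v hv
    rw [pz_mem_grade] at hv
    ext j'
    by_cases h : j' = j
    · subst h; simp [pzSel_apply, hjl]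
    · by_cases h' : j' = l
      · subst h'; simp [pzSel_apply, hjl.symm]
      · simp [h, h', hv j' (by rw [Ne, hj]; tauto)]

theorem pz_grade_big (k : Type*) [Field k] (i : ℕ) (hi : 6 < i) :
    Module.finrank k (relGrade k i) = 0 := by
  apply pz_n0
  intro v hv
  rw [pz_mem_grade] at hv
  ext j
  apply hv
  have : pzDeg j ≤ 6 := by revert j; decide
  omega

theorem pz_eq_zero (k : Type*) [Field k] (v : Fin 9 → k) : pzPsi k v = 0 ↔ v = 0 := by
  rw [← map_zero (pzPsi k), (pzPsi_inj k).eq_iff]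

theorem pz_socle (k : Type*) [Field k] : Module.finrank k
      ↥(LinearMap.ker (LinearMap.mulLeft k (Ideal.Quotient.mk (perazzoRelIdeal k)
          (MvPolynomial.X 0))) ⊓
        LinearMap.ker (LinearMap.mulLeft k (Ideal.Quotient.mk (perazzoRelIdeal k)
          (MvPolynomial.X 1)))) = 1 := by
  have key : ∀ v, pzPsi k v ∈ (LinearMap.ker (LinearMap.mulLeft k (Ideal.Quotient.mk
          (perazzoRelIdeal k) (MvPolynomial.X 0))) ⊓
        LinearMap.ker (LinearMap.mulLeft k (Ideal.Quotient.mk (perazzoRelIdeal k)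
          (MvPolynomial.X 1)))) ↔
      (![0, v 0, v 1, v 2, 0, 0, 0, 0, 0] : Fin 9 → k) = 0 ∧
      (![0, 0, 0, v 8, v 0, v 4, v 5, v 6, v 7] : Fin 9 → k) = 0 := by
    intro v
    rw [Submodule.mem_inf, LinearMap.mem_ker, LinearMap.mem_ker, LinearMap.mulLeft_apply,
      LinearMap.mulLeft_apply, mul_comm, pzPsi_mul_x, mul_comm, pzPsi_mul_y, pz_eq_zero, pz_eq_zero]
  refine pz_finrank k 1 _ (fun c => ![0, 0, 0, c 0, 0, 0, 0, 0, 0]) (pzSel k ![3]) ?_ ?_ ?_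
  · intro c; ext i; fin_cases i; simp [pzSel_apply]
  · intro c; rw [key, pz_zero_iff, pz_zero_iff]; simp
  · intro v hv; rw [key, pz_zero_iff, pz_zero_iff] at hv; simp at hv
    ext i; fin_cases i <;> simp [pzSel_apply] <;> grind

theorem pz_not (k : Type*) [Field k] : ¬ ∃ ℓ' ∈ relGrade k 1, ∀ n : ℕ,
        Module.finrank k (LinearMap.ker ((LinearMap.mulLeft k ℓ') ^ n)) =
          min n 7 + min n 2 := by
  rintro ⟨l, hl, h⟩
  have h1 := h 1
  rw [pow_one] at h1
  obtain ⟨w, rfl⟩ := pzPsi_surj k l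
  rw [pz_mem_grade] at hl
  have hw : pzPsi k w = algebraMap k (PzA k) (w 4) * pzy k := by
    have hw' : w = ![0, 0, 0, 0, w 4, 0, 0, 0, 0] := by
      ext j
      fin_cases j
      iterate 4 exact hl _ (by decide)
      · rfl
      all_goals exact hl _ (by decide)
    conv_lhs => rw [hw']
    simp [pzPsi, pzP]
    rfl
  have key : ∀ v, pzPsi k v ∈ LinearMap.ker (LinearMap.mulLeft k (pzPsi k w)) ↔
      w 4 • (![0, 0, 0, v 8, v 0, v 4, v 5, v 6, v 7] : Fin 9 → k) = 0 := by
    intro v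
    rw [LinearMap.mem_ker, LinearMap.mulLeft_apply, hw, mul_assoc, mul_comm (pzy k), pzPsi_mul_y,
      ← Algebra.smul_def, ← map_smul, pz_eq_zero]
  by_cases hc : w 4 = 0
  · rw [pz_n9 k _ (fun v => by rw [key, hc, zero_smul])] at h1
    norm_num at h1
  · simp only [smul_eq_zero, hc, false_or] at key
    rw [pz_finrank k 3 _ (fun c => ![0, c 0, c 1, c 2, 0, 0, 0, 0, 0]) (pzSel k ![1, 2, 3])] at h1
    · norm_num at h1
    · intro c; ext i; fin_cases i <;> simp [pzSel_apply]
    · intro c; rw [key, pz_zero_iff]; simp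
    · intro v hv; rw [key, pz_zero_iff] at hv; simp at hv
      ext i; fin_cases i <;> simp [pzSel_apply] <;> grind

/-- **Example (Example 3.4 / ex:G333).** Over a field of characteristic `0`, the
`9`-dimensional algebra `A = k[x,y]/(x³ - y⁶, xy)` is graded Artinian Gorenstein (with
`deg x = 2`, `deg y = 1`) with non-unimodal Hilbert function `(1,1,2,1,2,1,1)`, whose
conjugate partition is `(7,2)`; the (non-homogeneous) element `ℓ = x + y` has Jordan type
`(7,2)`, i.e. strong Lefschetz Jordan type, while `A` has no degree-one strong Lefschetz
element. -/
theorem relative_coinvariants_G333_SLJT_not_SL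
    (k : Type*) [Field k] [CharZero k] :
    Module.finrank k (MvPolynomial (Fin 2) k ⧸ perazzoRelIdeal k) = 9 ∧
    (∀ n : ℕ,
      Module.finrank k (LinearMap.ker
        ((LinearMap.mulLeft k (Ideal.Quotient.mk (perazzoRelIdeal k)
          (MvPolynomial.X 0 + MvPolynomial.X 1))) ^ n)) = min n 7 + min n 2) ∧
    (Module.finrank k (relGrade k 0) = 1 ∧ Module.finrank k (relGrade k 1) = 1 ∧
      Module.finrank k (relGrade k 2) = 2 ∧ Module.finrank k (relGrade k 3) = 1 ∧
      Module.finrank k (relGrade k 4) = 2 ∧ Module.finrank k (relGrade k 5) = 1 ∧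
      Module.finrank k (relGrade k 6) = 1 ∧
      ∀ i : ℕ, 6 < i → Module.finrank k (relGrade k i) = 0) ∧
    Module.finrank k
      ↥(LinearMap.ker (LinearMap.mulLeft k (Ideal.Quotient.mk (perazzoRelIdeal k)
          (MvPolynomial.X 0))) ⊓
        LinearMap.ker (LinearMap.mulLeft k (Ideal.Quotient.mk (perazzoRelIdeal k)
          (MvPolynomial.X 1)))) = 1 ∧
    ¬ ∃ ℓ' ∈ relGrade k 1, ∀ n : ℕ,
        Module.finrank k (LinearMap.ker ((LinearMap.mulLeft k ℓ') ^ n)) =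
          min n 7 + min n 2 := by
  refine ⟨?_, pz_jordan k, ⟨pz_grade1 k 0 0 (by decide), pz_grade1 k 1 4 (by decide),
    pz_grade2 k 2 1 5 (by decide) (by decide), pz_grade1 k 3 6 (by decide),
    pz_grade2 k 4 2 7 (by decide) (by decide), pz_grade1 k 5 8 (by decide),
    pz_grade1 k 6 3 (by decide), pz_grade_big k⟩, pz_socle k, pz_not k⟩
  rw [← (pzE k).finrank_eq]
  simp
end
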